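/- Let ω be a renormalizer on ℝ₊ = (0,∞) that is independent of t, and let (Φ,v) be a classical solution of the renormalized harmonic map system on ℝ₊×S² with constants Λ ≥ 1 and a > 0. Define the renormalized energy E(t) = (1/2) ∫_{S²} ( |∇_{g₀}Φ(t,·)|² + e^{4u(t,·)}|∇_{g₀}v(t,·)|² + 2(Δ_{g₀} ln ω)·Φ(t,·) ) dvol_{g₀}. Then for all t ∈ ℝ₊, the function t ↦ (1/2)∫_{S²}( |∂_tΦ|² + e^{4u}|∂_t v|² )(t,·) dvol_{g₀} − E(t) is differentiable and d/dt [ (1/2)∫_{S²}( |∂_tΦ|² + e^{4u}|∂_t v|² )(t,·) dvol_{g₀} − E(t) ] = ∫_{S²} ( |∂_tΦ|² + e^{4u}|∂_t v|² )(t,·) dvol_{g₀}. -/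

import Mathlib

open Real MeasureTheory Set Filter

noncomputable section

/-- `θ`-partial derivative of a function of `(θ, φ)`. -/
def pdθ (f : ℝ → ℝ → ℝ) : ℝ → ℝ → ℝ := fun θ φ => deriv (fun x => f x φ) θ

/-- `φ`-partial derivative of a function of `(θ, φ)`. -/
def pdφ (f : ℝ → ℝ → ℝ) : ℝ → ℝ → ℝ := fun θ φ => deriv (fun x => f θ x) φ

/-- coordinate derivative in direction `i` (`0 = θ`, `1 = φ`). -/
def pder2 (i : Fin 2) : (ℝ → ℝ → ℝ) → (ℝ → ℝ → ℝ) := if i = 0 then pdθ else pdφ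

/-- Christoffel symbols `Γ^m_{i j}` of the round metric on `S²` in `(θ, φ)`. -/
def christoffel (m i j : Fin 2) (θ : ℝ) : ℝ :=
  if m = 0 ∧ i = 1 ∧ j = 1 then -(Real.sin θ * Real.cos θ)
  else if m = 1 ∧ ((i = 0 ∧ j = 1) ∨ (i = 1 ∧ j = 0)) then Real.cos θ / Real.sin θ
  else 0

/-- covariant derivative (in the round metric) of a `k`-tensor on `S²`,
given by its coordinate components. -/
def covDer {k : ℕ} (T : (Fin k → Fin 2) → ℝ → ℝ → ℝ) :
    (Fin (k + 1) → Fin 2) → ℝ → ℝ → ℝ := fun I θ φ =>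
  pder2 (I 0) (T fun j => I j.succ) θ φ
    - ∑ j : Fin k, ∑ m : Fin 2,
        christoffel m (I 0) (I j.succ) θ *
          T (Function.update (fun j' => I j'.succ) j m) θ φ

/-- the `k`-th covariant derivative of a function on `S²`. -/
def covIter (f : ℝ → ℝ → ℝ) : (k : ℕ) → (Fin k → Fin 2) → ℝ → ℝ → ℝ
  | 0 => fun _ => f
  | k + 1 => covDer (covIter f k)

/-- inverse-metric weight used to compute tensor norms. -/
def sphWeight (i : Fin 2) (θ : ℝ) : ℝ := if i = 0 then 1 else (Real.sin θ ^ 2)⁻¹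

/-- `|∇_{g₀}^k f|`, the norm of the `k`-th covariant derivative in the round metric. -/
def covNorm (k : ℕ) (f : ℝ → ℝ → ℝ) (θ φ : ℝ) : ℝ :=
  Real.sqrt (∑ I : Fin k → Fin 2, (∏ j, sphWeight (I j) θ) * (covIter f k I θ φ) ^ 2)

/-- `∇_{g₀}f·∇_{g₀}h` on the round sphere. -/
def gradDotS2 (f g : ℝ → ℝ → ℝ) (θ φ : ℝ) : ℝ :=
  pdθ f θ φ * pdθ g θ φ + (Real.sin θ ^ 2)⁻¹ * pdφ f θ φ * pdφ g θ φ

/-- `|∇_{g₀}f|²` on the round sphere. -/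
def gradNormSqS2 (f : ℝ → ℝ → ℝ) (θ φ : ℝ) : ℝ := gradDotS2 f f θ φ

/-- `Δ_{g₀}f`, the round Laplacian in coordinates. -/
def lapS2 (f : ℝ → ℝ → ℝ) (θ φ : ℝ) : ℝ :=
  pdθ (pdθ f) θ φ + (Real.cos θ / Real.sin θ) * pdθ f θ φ +
    (Real.sin θ ^ 2)⁻¹ * pdφ (pdφ f) θ φ

/-- integral over `S²` with respect to `dvol_{g₀} = sinθ dθ dφ`. -/
def sphInt (f : ℝ → ℝ → ℝ) : ℝ :=
  ∫ θ in Ioo (0 : ℝ) π, (∫ φ in Ioo (0 : ℝ) (2 * π), f θ φ) * Real.sin θ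

/-- round distance between the points with coordinates `(θ, φ)` and `(θ', φ')`. -/
def sDist (θ φ θ' φ' : ℝ) : ℝ :=
  Real.arccos (Real.cos θ * Real.cos θ' + Real.sin θ * Real.sin θ' * Real.cos (φ - φ'))

/-- a function on `S²` (in coordinates), of class `C^k`, with bounded covariant
derivatives up to order `k`. -/
def CkSphere (k : ℕ) (f : ℝ → ℝ → ℝ) : Prop :=
  ContDiffOn ℝ k (fun p : ℝ × ℝ => f p.1 p.2) (Ioo 0 π ×ˢ (univ : Set ℝ)) ∧
  (∀ θ φ : ℝ, f θ (φ + 2 * π) = f θ φ) ∧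
  ∃ C : ℝ, ∀ j ≤ k, ∀ θ ∈ Ioo (0 : ℝ) π, ∀ φ : ℝ, covNorm j f θ φ ≤ C

/-- a smooth function on `S²` (in coordinates), with bounded covariant derivatives
of all orders. -/
def SmoothSphere (f : ℝ → ℝ → ℝ) : Prop :=
  ContDiffOn ℝ (⊤ : ℕ∞) (fun p : ℝ × ℝ => f p.1 p.2) (Ioo 0 π ×ˢ (univ : Set ℝ)) ∧
  (∀ θ φ : ℝ, f θ (φ + 2 * π) = f θ φ) ∧
  ∀ j : ℕ, ∃ C : ℝ, ∀ θ ∈ Ioo (0 : ℝ) π, ∀ φ : ℝ, covNorm j f θ φ ≤ C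
/-- `t`-partial derivative on the cylinder. -/
def cdt (F : ℝ → ℝ → ℝ → ℝ) : ℝ → ℝ → ℝ → ℝ := fun t θ φ => deriv (fun s => F s θ φ) t

/-- `θ`-partial derivative on the cylinder. -/
def cdθ (F : ℝ → ℝ → ℝ → ℝ) : ℝ → ℝ → ℝ → ℝ := fun t => pdθ (F t)

/-- `φ`-partial derivative on the cylinder. -/
def cdφ (F : ℝ → ℝ → ℝ → ℝ) : ℝ → ℝ → ℝ → ℝ := fun t => pdφ (F t)

/-- the operator `L = ∂_t² − ∂_t + Δ_{g₀}` on the cylinder. -/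
def cL (F : ℝ → ℝ → ℝ → ℝ) : ℝ → ℝ → ℝ → ℝ := fun t θ φ =>
  cdt (cdt F) t θ φ - cdt F t θ φ + lapS2 (F t) θ φ

/-- `∇_g F·∇_g G` for the product metric `g = dt² + g₀`. -/
def cgradDot (F G : ℝ → ℝ → ℝ → ℝ) (t θ φ : ℝ) : ℝ :=
  cdt F t θ φ * cdt G t θ φ + gradDotS2 (F t) (G t) θ φ

/-- `|∇_g F|²` for the product metric `g = dt² + g₀`. -/
def cgradNormSq (F : ℝ → ℝ → ℝ → ℝ) (t θ φ : ℝ) : ℝ := cgradDot F F t θ φ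

/-- a renormalizer `ω` on the interval `I`: positive and smooth away from the poles,
with `ln ω − ln sinθ` extending continuously to `I×S²` together with all its
coordinate derivatives of order `≤ 10`, bounded in absolute value by `A₁ ≥ 1`. -/
structure Renormalizer (I : Set ℝ) (A₁ : ℝ) : Type where
  ω : ℝ → ℝ → ℝ → ℝ
  A₁_ge : 1 ≤ A₁
  pos : ∀ t ∈ I, ∀ θ ∈ Ioo (0 : ℝ) π, ∀ φ : ℝ, 0 < ω t θ φ
  periodic : ∀ t θ φ : ℝ, ω t θ (φ + 2 * π) = ω t θ φ
  smooth : ContDiffOn ℝ (⊤ : ℕ∞) (fun p : ℝ × ℝ × ℝ => ω p.1 p.2.1 p.2.2)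
    (I ×ˢ (Ioo (0 : ℝ) π ×ˢ (univ : Set ℝ)))
  deriv_ext : ∀ m l n : ℕ, m + l + n ≤ 10 →
    ∃ G : ℝ → ℝ → ℝ → ℝ,
      ContinuousOn (fun p : ℝ × ℝ × ℝ => G p.1 p.2.1 p.2.2)
        (I ×ˢ (Icc (0 : ℝ) π ×ˢ (univ : Set ℝ))) ∧
      (∀ t ∈ I, ∀ θ ∈ Ioo (0 : ℝ) π, ∀ φ : ℝ,
        G t θ φ = (cdt^[m] (cdθ^[l] (cdφ^[n]
          (fun t θ φ => Real.log (ω t θ φ) - Real.log (Real.sin θ))))) t θ φ) ∧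
      (∀ t ∈ I, ∀ θ ∈ Icc (0 : ℝ) π, ∀ φ : ℝ, |G t θ φ| ≤ A₁)

/-- a classical solution `(Φ, v)` of the renormalized harmonic map system on `I×S²`,
with constants `Λ ≥ 1` and `a > 0`:  `C³` on `I×S²` and smooth in `t` and `φ`,
satisfying `LΦ = 2e^{4u}|∇_g v|² + L ln ω` and `Lv = −4∇_g u·∇_g v` (where
`u = Φ − ln ω`), `|Φ| ≤ Λ`, with locally finite renormalized energy, and with
traces `v = a` at the north pole and `v = −a` at the south pole. -/
structure RHMSolution (I : Set ℝ) (A₁ : ℝ) (R : Renormalizer I A₁) (Λ a : ℝ) :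
    Type where
  Φ : ℝ → ℝ → ℝ → ℝ
  v : ℝ → ℝ → ℝ → ℝ
  Λ_ge : 1 ≤ Λ
  a_pos : 0 < a
  periodicΦ : ∀ t θ φ : ℝ, Φ t θ (φ + 2 * π) = Φ t θ φ
  periodicv : ∀ t θ φ : ℝ, v t θ (φ + 2 * π) = v t θ φ
  regΦ : ContDiffOn ℝ 3 (fun p : ℝ × ℝ × ℝ => Φ p.1 p.2.1 p.2.2)
    (I ×ˢ (Icc (0 : ℝ) π ×ˢ (univ : Set ℝ)))
  regv : ContDiffOn ℝ 3 (fun p : ℝ × ℝ × ℝ => v p.1 p.2.1 p.2.2)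
    (I ×ˢ (Icc (0 : ℝ) π ×ˢ (univ : Set ℝ)))
  smooth_tφ_Φ : ∀ θ ∈ Icc (0 : ℝ) π,
    ContDiffOn ℝ (⊤ : ℕ∞) (fun q : ℝ × ℝ => Φ q.1 θ q.2) (I ×ˢ (univ : Set ℝ))
  smooth_tφ_v : ∀ θ ∈ Icc (0 : ℝ) π,
    ContDiffOn ℝ (⊤ : ℕ∞) (fun q : ℝ × ℝ => v q.1 θ q.2) (I ×ˢ (univ : Set ℝ))
  eqΦ : ∀ t ∈ I, ∀ θ ∈ Ioo (0 : ℝ) π, ∀ φ : ℝ,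
    cL Φ t θ φ =
      2 * Real.exp (4 * (Φ t θ φ - Real.log (R.ω t θ φ))) * cgradNormSq v t θ φ
        + cL (fun t θ φ => Real.log (R.ω t θ φ)) t θ φ
  eqv : ∀ t ∈ I, ∀ θ ∈ Ioo (0 : ℝ) π, ∀ φ : ℝ,
    cL v t θ φ =
      -4 * cgradDot (fun t θ φ => Φ t θ φ - Real.log (R.ω t θ φ)) v t θ φ
  bddΦ : ∀ t ∈ I, ∀ θ ∈ Icc (0 : ℝ) π, ∀ φ : ℝ, |Φ t θ φ| ≤ Λ
  energy_loc : ∀ J : Set ℝ, J ⊆ I → IsCompact J →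
    IntegrableOn (fun p : ℝ × ℝ × ℝ =>
      (cgradNormSq Φ p.1 p.2.1 p.2.2
        + ((R.ω p.1 p.2.1 p.2.2) ^ 4)⁻¹ * cgradNormSq v p.1 p.2.1 p.2.2)
        * Real.sin p.2.1)
      (J ×ˢ (Ioo (0 : ℝ) π ×ˢ Ioo (0 : ℝ) (2 * π))) volume
  traceN : ∀ t ∈ I, ∀ φ : ℝ, v t 0 φ = a
  traceS : ∀ t ∈ I, ∀ φ : ℝ, v t π φ = -a

open scoped Topology

/-!
Multiplying the equation for `Φ` by `∂_tΦ`, the one for `v` by `e^{4u} ∂_t v` and adding gives, away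
from the poles, a divergence identity
`∂_t (½ (K - G) sin θ) = K sin θ + ∂_θ B + ∂_φ D`
with `K` the kinetic density, `G` the integrand of `2E` and `(B, D)` the momentum flux, because
`∂_t ln ω = 0`. Integrating it outside two polar caps leaves the integral of `B` over the boundary
parallels, which is `O(sin θ)`, so the identity survives as the caps shrink.

The bounds near the poles come from the finite energy. A continuous function whose square, with the
right singular weight, is controlled by the energy density must vanish at the poles; this gives
`∂_φΦ = O(sin θ)` and `∂_θ v, ∂_t v = O(sin² θ)`, enough to beat `e^{4u} = O(sin⁻⁴ θ)` in `K` and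
`B`. For `G` the same argument applied to the equation for `Φ` shows that `∂_φ² ln ω` vanishes at
the poles, hence `Δ_{g₀} ln ω` and `e^{4u} |∇_g v|²` are `O(sin⁻¹ θ)`, which is integrable.
-/

/-! ### Differentiation on a coordinate cylinder -/

/-- `F` is of class `C^n` as a function of `(t, θ, φ) ∈ I × J × ℝ`. Taking `J = [0, π]` or
`J = (0, π)` gives the coordinate cylinder with or without the poles. -/
def ContDiffOnCyl (n : WithTop ℕ∞) (I J : Set ℝ) (F : ℝ → ℝ → ℝ → ℝ) : Prop :=
  ContDiffOn ℝ n (fun p : ℝ × ℝ × ℝ => F p.1 p.2.1 p.2.2) (I ×ˢ J ×ˢ univ)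

/-- The `θ`-derivative within `J`. For `J = [0, π]` it is one-sided at the poles, where the
two-sided derivative `cdθ` has a junk value. -/
def cdθWithin (J : Set ℝ) (F : ℝ → ℝ → ℝ → ℝ) : ℝ → ℝ → ℝ → ℝ :=
  fun t θ φ => derivWithin (fun x => F t x φ) J θ

lemma hasDerivAt_fderiv_comp_apply {E : Type*} [NormedAddCommGroup E]
    [NormedSpace ℝ E] {f : E → ℝ} {γ : ℝ → E} {s : ℝ} {e : E} (hf : ContDiffAt ℝ 2 f (γ s))
    (hγ : HasDerivAt γ e s) (e' : E) :
    HasDerivAt (fun r => fderiv ℝ f (γ r) e') (fderiv ℝ (fderiv ℝ f) (γ s) e e') s := by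
  have hd : HasFDerivAt (fderiv ℝ f) (fderiv ℝ (fderiv ℝ f) (γ s)) (γ s) :=
    ((hf.fderiv_right (m := 1) (by norm_num)).differentiableAt (by norm_num)).hasFDerivAt
  simpa using (hd.comp_hasDerivAt s hγ).clm_apply (hasDerivAt_const s e')

lemma hasDerivAt_coord_t (t θ φ : ℝ) :
    HasDerivAt (fun s : ℝ => (s, θ, φ)) ((1, 0, 0) : ℝ × ℝ × ℝ) t :=
  (hasDerivAt_id t).prodMk (hasDerivAt_const t (θ, φ))

lemma hasDerivAt_coord_θ (t θ φ : ℝ) :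
    HasDerivAt (fun x : ℝ => (t, x, φ)) ((0, 1, 0) : ℝ × ℝ × ℝ) θ :=
  (hasDerivAt_const θ t).prodMk ((hasDerivAt_id θ).prodMk (hasDerivAt_const θ φ))

lemma hasDerivAt_coord_φ (t θ φ : ℝ) :
    HasDerivAt (fun x : ℝ => (t, θ, x)) ((0, 0, 1) : ℝ × ℝ × ℝ) φ :=
  (hasDerivAt_const φ t).prodMk ((hasDerivAt_const φ θ).prodMk (hasDerivAt_id φ))

namespace ContDiffOnCyl

section

variable {m n : WithTop ℕ∞} {I J : Set ℝ} {F : ℝ → ℝ → ℝ → ℝ} {t θ φ : ℝ}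

lemma mono {J' : Set ℝ} (hF : ContDiffOnCyl n I J F) (h : J' ⊆ J) : ContDiffOnCyl n I J' F :=
  ContDiffOn.mono hF (prod_mono_right (prod_mono_left h))

lemma of_le (hF : ContDiffOnCyl n I J F) (h : m ≤ n) : ContDiffOnCyl m I J F :=
  ContDiffOn.of_le hF h

lemma continuousOn (hF : ContDiffOnCyl n I J F) :
    ContinuousOn (fun p : ℝ × ℝ × ℝ => F p.1 p.2.1 p.2.2) (I ×ˢ J ×ˢ univ) :=
  ContDiffOn.continuousOn hF

lemma hasDerivAt_t (hF : ContDiffOnCyl n I J F) (hn : n ≠ 0) (hI : IsOpen I) (ht : t ∈ I)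
    (hθ : θ ∈ J) (φ : ℝ) : HasDerivAt (fun s => F s θ φ) (cdt F t θ φ) t := by
  have hslice : ContDiffOn ℝ n (fun s => F s θ φ) I :=
    ContDiffOn.comp (f := fun s => (s, θ, φ)) hF (by fun_prop) fun s hs => ⟨hs, hθ, mem_univ φ⟩
  exact ((hslice.contDiffAt (hI.mem_nhds ht)).differentiableAt hn).hasDerivAt

lemma hasDerivAt_φ (hF : ContDiffOnCyl n I J F) (hn : n ≠ 0) (ht : t ∈ I) (hθ : θ ∈ J) (φ : ℝ) :
    HasDerivAt (fun x => F t θ x) (cdφ F t θ φ) φ := by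
  have hslice : ContDiffOn ℝ n (fun x => F t θ x) univ :=
    ContDiffOn.comp (f := fun x => (t, θ, x)) hF (by fun_prop) fun x hx => ⟨ht, hθ, hx⟩
  exact ((hslice.contDiffAt univ_mem).differentiableAt hn).hasDerivAt

lemma contDiffOn_θ (hF : ContDiffOnCyl n I J F) (ht : t ∈ I) (φ : ℝ) :
    ContDiffOn ℝ n (fun x => F t x φ) J :=
  ContDiffOn.comp (f := fun x => (t, x, φ)) hF (by fun_prop) fun x hx => ⟨ht, hx, mem_univ φ⟩

lemma hasDerivWithinAt_θ (hF : ContDiffOnCyl n I J F) (hn : n ≠ 0) (ht : t ∈ I) (hθ : θ ∈ J)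
    (φ : ℝ) : HasDerivWithinAt (fun x => F t x φ) (cdθWithin J F t θ φ) J θ :=
  ((hF.contDiffOn_θ ht φ).differentiableOn hn θ hθ).hasDerivWithinAt

lemma hasDerivAt_θ (hF : ContDiffOnCyl n I J F) (hn : n ≠ 0) (ht : t ∈ I) (hθ : J ∈ 𝓝 θ)
    (φ : ℝ) : HasDerivAt (fun x => F t x φ) (cdθ F t θ φ) θ :=
  (((hF.contDiffOn_θ ht φ).contDiffAt hθ).differentiableAt hn).hasDerivAt

lemma fderivWithin_apply (hF : ContDiffOnCyl n I J F) (hI : IsOpen I)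
    (hJ : UniqueDiffOn ℝ J) (hmn : m + 1 ≤ n) (e : ℝ × ℝ × ℝ) :
    ContDiffOn ℝ m (fun p => fderivWithin ℝ (fun p : ℝ × ℝ × ℝ => F p.1 p.2.1 p.2.2)
      (I ×ˢ J ×ˢ univ) p e) (I ×ˢ J ×ˢ univ) :=
  (ContDiffOn.fderivWithin hF (hI.uniqueDiffOn.prod (hJ.prod uniqueDiffOn_univ)) hmn).clm_apply
    contDiffOn_const

lemma hasFDerivWithinAt (hF : ContDiffOnCyl n I J F) (hn : n ≠ 0) (ht : t ∈ I) (hθ : θ ∈ J)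
    (φ : ℝ) : HasFDerivWithinAt (fun p : ℝ × ℝ × ℝ => F p.1 p.2.1 p.2.2)
      (fderivWithin ℝ (fun p : ℝ × ℝ × ℝ => F p.1 p.2.1 p.2.2) (I ×ˢ J ×ˢ univ) (t, θ, φ))
      (I ×ˢ J ×ˢ univ) (t, θ, φ) :=
  (ContDiffOn.differentiableOn hF hn _ ⟨ht, hθ, mem_univ φ⟩).hasFDerivWithinAt

protected lemma cdt (hF : ContDiffOnCyl n I J F) (hI : IsOpen I) (hJ : UniqueDiffOn ℝ J)
    (hmn : m + 1 ≤ n) : ContDiffOnCyl m I J (cdt F) := by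
  refine ContDiffOn.congr (hF.fderivWithin_apply hI hJ hmn (1, 0, 0)) ?_
  rintro ⟨t, θ, φ⟩ ⟨ht, hθ, -⟩
  have hn : n ≠ 0 := by rintro rfl; simp at hmn
  have hmaps : MapsTo (fun s : ℝ => (s, θ, φ)) I (I ×ˢ J ×ˢ univ) :=
    fun s hs => ⟨hs, hθ, mem_univ φ⟩
  have hcomp := (hF.hasFDerivWithinAt hn ht hθ φ).comp_hasDerivWithinAt t
    (hasDerivAt_coord_t t θ φ).hasDerivWithinAt hmaps
  exact (hF.hasDerivAt_t hn hI ht hθ φ).unique (hcomp.hasDerivAt (hI.mem_nhds ht))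

protected lemma cdφ (hF : ContDiffOnCyl n I J F) (hI : IsOpen I) (hJ : UniqueDiffOn ℝ J)
    (hmn : m + 1 ≤ n) : ContDiffOnCyl m I J (cdφ F) := by
  refine ContDiffOn.congr (hF.fderivWithin_apply hI hJ hmn (0, 0, 1)) ?_
  rintro ⟨t, θ, φ⟩ ⟨ht, hθ, -⟩
  have hn : n ≠ 0 := by rintro rfl; simp at hmn
  have hmaps : MapsTo (fun x : ℝ => (t, θ, x)) univ (I ×ˢ J ×ˢ univ) :=
    fun x hx => ⟨ht, hθ, hx⟩
  have hcomp := (hF.hasFDerivWithinAt hn ht hθ φ).comp_hasDerivWithinAt φ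
    (hasDerivAt_coord_φ t θ φ).hasDerivWithinAt hmaps
  exact (hF.hasDerivAt_φ hn ht hθ φ).unique (hcomp.hasDerivAt univ_mem)

protected lemma cdθWithin (hF : ContDiffOnCyl n I J F) (hI : IsOpen I) (hJ : UniqueDiffOn ℝ J)
    (hmn : m + 1 ≤ n) : ContDiffOnCyl m I J (cdθWithin J F) := by
  refine ContDiffOn.congr (hF.fderivWithin_apply hI hJ hmn (0, 1, 0)) ?_
  rintro ⟨t, θ, φ⟩ ⟨ht, hθ, -⟩
  have hn : n ≠ 0 := by rintro rfl; simp at hmn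
  have hmaps : MapsTo (fun x : ℝ => (t, x, φ)) J (I ×ˢ J ×ˢ univ) :=
    fun x hx => ⟨ht, hx, mem_univ φ⟩
  have hcomp := (hF.hasFDerivWithinAt hn ht hθ φ).comp_hasDerivWithinAt θ
    (hasDerivAt_coord_θ t θ φ).hasDerivWithinAt hmaps
  exact hcomp.derivWithin (hJ θ hθ)

lemma congr {F' : ℝ → ℝ → ℝ → ℝ} (hF : ContDiffOnCyl n I J F)
    (h : ∀ t ∈ I, ∀ θ ∈ J, ∀ φ, F' t θ φ = F t θ φ) : ContDiffOnCyl n I J F' :=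
  ContDiffOn.congr hF fun p hp => h p.1 hp.1 p.2.1 hp.2.1 p.2.2

protected lemma cdθ (hF : ContDiffOnCyl n I J F) (hI : IsOpen I) (hJ : IsOpen J)
    (hmn : m + 1 ≤ n) : ContDiffOnCyl m I J (cdθ F) :=
  (hF.cdθWithin hI hJ.uniqueDiffOn hmn).congr fun _ _ _ hθ _ =>
    (derivWithin_of_isOpen hJ hθ).symm

lemma contDiffAt (hF : ContDiffOnCyl n I J F) (hI : IsOpen I) (hJ : IsOpen J) (ht : t ∈ I)
    (hθ : θ ∈ J) (φ : ℝ) :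
    ContDiffAt ℝ n (fun p : ℝ × ℝ × ℝ => F p.1 p.2.1 p.2.2) (t, θ, φ) :=
  ContDiffOn.contDiffAt hF
    ((hI.prod (hJ.prod isOpen_univ)).mem_nhds ⟨ht, hθ, mem_univ φ⟩)

lemma cdt_eq_fderiv (hF : ContDiffOnCyl n I J F) (hn : n ≠ 0) (hI : IsOpen I) (hJ : IsOpen J)
    (ht : t ∈ I) (hθ : θ ∈ J) (φ : ℝ) :
    cdt F t θ φ = fderiv ℝ (fun p : ℝ × ℝ × ℝ => F p.1 p.2.1 p.2.2) (t, θ, φ) (1, 0, 0) :=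
  (((hF.contDiffAt hI hJ ht hθ φ).differentiableAt hn).hasFDerivAt.comp_hasDerivAt_of_eq t
    (hasDerivAt_coord_t t θ φ) rfl).deriv

lemma cdθ_eq_fderiv (hF : ContDiffOnCyl n I J F) (hn : n ≠ 0) (hI : IsOpen I) (hJ : IsOpen J)
    (ht : t ∈ I) (hθ : θ ∈ J) (φ : ℝ) :
    cdθ F t θ φ = fderiv ℝ (fun p : ℝ × ℝ × ℝ => F p.1 p.2.1 p.2.2) (t, θ, φ) (0, 1, 0) :=
  (((hF.contDiffAt hI hJ ht hθ φ).differentiableAt hn).hasFDerivAt.comp_hasDerivAt_of_eq θ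
    (hasDerivAt_coord_θ t θ φ) rfl).deriv

lemma cdφ_eq_fderiv (hF : ContDiffOnCyl n I J F) (hn : n ≠ 0) (hI : IsOpen I) (hJ : IsOpen J)
    (ht : t ∈ I) (hθ : θ ∈ J) (φ : ℝ) :
    cdφ F t θ φ = fderiv ℝ (fun p : ℝ × ℝ × ℝ => F p.1 p.2.1 p.2.2) (t, θ, φ) (0, 0, 1) :=
  (((hF.contDiffAt hI hJ ht hθ φ).differentiableAt hn).hasFDerivAt.comp_hasDerivAt_of_eq φ
    (hasDerivAt_coord_φ t θ φ) rfl).deriv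

lemma cdt_cdθ_comm (hF : ContDiffOnCyl 2 I J F) (hI : IsOpen I) (hJ : IsOpen J)
    (ht : t ∈ I) (hθ : θ ∈ J) (φ : ℝ) : cdt (cdθ F) t θ φ = cdθ (cdt F) t θ φ := by
  have hf := hF.contDiffAt hI hJ ht hθ φ
  have hsymm := (hf.isSymmSndFDerivAt (by simp)).eq (1, 0, 0) (0, 1, 0)
  have htθ := hasDerivAt_fderiv_comp_apply hf (hasDerivAt_coord_t t θ φ) (0, 1, 0)
  have hθt := hasDerivAt_fderiv_comp_apply hf (hasDerivAt_coord_θ t θ φ) (1, 0, 0)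
  have htθ' : cdt (cdθ F) t θ φ = _ := (htθ.congr_of_eventuallyEq <|
    (hI.eventually_mem ht).mono fun s hs => hF.cdθ_eq_fderiv two_ne_zero hI hJ hs hθ φ).deriv
  have hθt' : cdθ (cdt F) t θ φ = _ := (hθt.congr_of_eventuallyEq <|
    (hJ.eventually_mem hθ).mono fun x hx => hF.cdt_eq_fderiv two_ne_zero hI hJ ht hx φ).deriv
  rw [htθ', hθt', hsymm]

lemma cdt_cdφ_comm (hF : ContDiffOnCyl 2 I J F) (hI : IsOpen I) (hJ : IsOpen J)
    (ht : t ∈ I) (hθ : θ ∈ J) (φ : ℝ) : cdt (cdφ F) t θ φ = cdφ (cdt F) t θ φ := by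
  have hf := hF.contDiffAt hI hJ ht hθ φ
  have hsymm := (hf.isSymmSndFDerivAt (by simp)).eq (1, 0, 0) (0, 0, 1)
  have htφ := hasDerivAt_fderiv_comp_apply hf (hasDerivAt_coord_t t θ φ) (0, 0, 1)
  have hφt := hasDerivAt_fderiv_comp_apply hf (hasDerivAt_coord_φ t θ φ) (1, 0, 0)
  have htφ' : cdt (cdφ F) t θ φ = _ := (htφ.congr_of_eventuallyEq <|
    (hI.eventually_mem ht).mono fun s hs => hF.cdφ_eq_fderiv two_ne_zero hI hJ hs hθ φ).deriv
  have hφt' : cdφ (cdt F) t θ φ = _ := (hφt.congr_of_eventuallyEq <|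
    Eventually.of_forall fun x => hF.cdt_eq_fderiv two_ne_zero hI hJ ht hθ x).deriv
  rw [htφ', hφt', hsymm]

end

end ContDiffOnCyl

/-! ### Decay at the poles -/

lemma le_two_mul_sin {x : ℝ} (h0 : 0 ≤ x) (h1 : x ≤ π / 2) : x ≤ 2 * sin x := by
  have hjordan := mul_le_sin h0 h1
  have hpi : 1 / 2 ≤ 2 / π := by rw [div_le_div_iff₀ two_pos pi_pos]; linarith [pi_le_four]
  nlinarith

section

variable {θ₀ θ : ℝ}

lemma sin_abs_sub_pole (hθ₀ : θ₀ = 0 ∨ θ₀ = π) (hθ : θ ∈ Icc 0 π) : sin |θ - θ₀| = sin θ := by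
  rcases hθ₀ with rfl | rfl
  · rw [sub_zero, abs_of_nonneg hθ.1]
  · rw [abs_of_nonpos (by linarith [hθ.2]), neg_sub, sin_pi_sub]

lemma sin_le_abs_sub_pole (hθ₀ : θ₀ = 0 ∨ θ₀ = π) (hθ : θ ∈ Icc 0 π) : sin θ ≤ |θ - θ₀| :=
  sin_abs_sub_pole hθ₀ hθ ▸ sin_le (abs_nonneg _)

lemma abs_sub_pole_le_two_mul_sin (hθ₀ : θ₀ = 0 ∨ θ₀ = π) (hθ : θ ∈ Icc 0 π)
    (h : |θ - θ₀| ≤ π / 2) : |θ - θ₀| ≤ 2 * sin θ :=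
  sin_abs_sub_pole hθ₀ hθ ▸ le_two_mul_sin (abs_nonneg _) h

lemma sin_le_sin_of_abs_sub_pole_le {ξ : ℝ} (hθ₀ : θ₀ = 0 ∨ θ₀ = π) (hξ : ξ ∈ Icc 0 π)
    (hθ : θ ∈ Icc 0 π) (hξθ : |ξ - θ₀| ≤ |θ - θ₀|) (h : |θ - θ₀| ≤ π / 2) : sin ξ ≤ sin θ := by
  rw [← sin_abs_sub_pole hθ₀ hξ, ← sin_abs_sub_pole hθ₀ hθ]
  exact sin_le_sin_of_le_of_le_pi_div_two (by linarith [abs_nonneg (ξ - θ₀), pi_pos]) h hξθ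

lemma exists_abs_eq_abs_deriv_mul {f f' : ℝ → ℝ} (hf : ContinuousOn f (Icc 0 π))
    (hf' : ∀ x ∈ Ioo 0 π, HasDerivAt f (f' x) x) (hθ₀ : θ₀ = 0 ∨ θ₀ = π) (h0 : f θ₀ = 0)
    (hθ : θ ∈ Ioo 0 π) :
    ∃ ξ ∈ Ioo 0 π, |ξ - θ₀| ≤ |θ - θ₀| ∧ |f θ| = |f' ξ| * |θ - θ₀| := by
  rcases hθ₀ with rfl | rfl
  · obtain ⟨ξ, hξ, hslope⟩ := exists_hasDerivAt_eq_slope f f' hθ.1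
      (hf.mono (Icc_subset_Icc_right hθ.2.le)) fun y hy => hf' y ⟨hy.1, hy.2.trans hθ.2⟩
    refine ⟨ξ, ⟨hξ.1, hξ.2.trans hθ.2⟩, ?_, ?_⟩
    · simpa only [sub_zero, abs_of_pos hξ.1, abs_of_pos hθ.1] using hξ.2.le
    · rw [← abs_mul, hslope, h0, sub_zero, sub_zero, div_mul_cancel₀ _ hθ.1.ne']
  · obtain ⟨ξ, hξ, hslope⟩ := exists_hasDerivAt_eq_slope f f' hθ.2
      (hf.mono (Icc_subset_Icc_left hθ.1.le)) fun y hy => hf' y ⟨hθ.1.trans hy.1, hy.2⟩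
    refine ⟨ξ, ⟨hθ.1.trans hξ.1, hξ.2⟩, ?_, ?_⟩
    · rw [abs_of_neg (sub_neg.2 hξ.2), abs_of_neg (sub_neg.2 hθ.2)]
      linarith [hξ.1]
    · rw [abs_sub_comm θ, ← abs_mul, hslope, h0, zero_sub, div_mul_cancel₀ _ (sub_pos.2 hθ.2).ne',
        abs_neg]

end

lemma abs_le_mul_sin_pow_succ {f f' : ℝ → ℝ} {C : ℝ} {k : ℕ} (hC : 0 ≤ C)
    (hf : ContinuousOn f (Icc 0 π)) (hf' : ∀ x ∈ Ioo 0 π, HasDerivAt f (f' x) x)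
    (hbound : ∀ x ∈ Ioo 0 π, |f' x| ≤ C * sin x ^ k) (h0 : f 0 = 0) (hπ : f π = 0) {θ : ℝ}
    (hθ : θ ∈ Ioo 0 π) : |f θ| ≤ 2 * C * sin θ ^ (k + 1) := by
  obtain ⟨θ₀, hθ₀, hfθ₀, hnear⟩ :
      ∃ θ₀, (θ₀ = 0 ∨ θ₀ = π) ∧ f θ₀ = 0 ∧ |θ - θ₀| ≤ π / 2 := by
    rcases le_total θ (π / 2) with h | h
    · exact ⟨0, .inl rfl, h0, by rwa [sub_zero, abs_of_pos hθ.1]⟩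
    · exact ⟨π, .inr rfl, hπ, by rw [abs_of_neg (sub_neg.2 hθ.2)]; linarith⟩
  obtain ⟨ξ, hξ, hξθ, heq⟩ := exists_abs_eq_abs_deriv_mul hf hf' hθ₀ hfθ₀ hθ
  have hsin : sin ξ ≤ sin θ := sin_le_sin_of_abs_sub_pole_le hθ₀ (Ioo_subset_Icc_self hξ)
    (Ioo_subset_Icc_self hθ) hξθ hnear
  have hsinξ := (sin_pos_of_mem_Ioo hξ).le
  calc |f θ| = |f' ξ| * |θ - θ₀| := heq
    _ ≤ (C * sin ξ ^ k) * (2 * sin θ) := by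
        gcongr
        · exact hbound ξ hξ
        · exact abs_sub_pole_le_two_mul_sin hθ₀ (Ioo_subset_Icc_self hθ) hnear
    _ ≤ (C * sin θ ^ k) * (2 * sin θ) := by
        have := (sin_pos_of_mem_Ioo hθ).le
        gcongr
    _ = 2 * C * sin θ ^ (k + 1) := by ring

/-! ### Non-integrability at the poles -/

section

variable {α β : Type*} [MeasurableSpace α] [MeasurableSpace β] {μ : Measure α} {ν : Measure β}
  [SFinite μ] [SFinite ν] {l : Filter α} {l' : Filter β}

lemma integrableAtFilter_of_comp_fst {f : α → ℝ} (hl' : ∀ s ∈ l', ν s ≠ 0)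
    (hf : IntegrableAtFilter (fun p : α × β => f p.1) (l ×ˢ l') (μ.prod ν)) :
    IntegrableAtFilter f l μ := by
  obtain ⟨u, hu, hfu⟩ := hf
  obtain ⟨s, hs, s', hs', hsub⟩ := mem_prod_iff.1 hu
  have hfs := hfu.mono_set hsub
  rw [IntegrableOn, ← Measure.prod_restrict] at hfs
  have : (ae (ν.restrict s')).NeBot := ae_neBot.2 (Measure.restrict_eq_zero.not.2 (hl' s' hs'))
  obtain ⟨_, hy⟩ := hfs.prod_left_ae.exists
  exact ⟨s, hs, hy⟩

lemma integrableAtFilter_of_comp_snd {f : β → ℝ} (hl : ∀ s ∈ l, μ s ≠ 0)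
    (hf : IntegrableAtFilter (fun p : α × β => f p.2) (l ×ˢ l') (μ.prod ν)) :
    IntegrableAtFilter f l' ν := by
  obtain ⟨u, hu, hfu⟩ := hf
  obtain ⟨s, hs, s', hs', hsub⟩ := mem_prod_iff.1 hu
  have hfs := hfu.mono_set hsub
  rw [IntegrableOn, ← Measure.prod_restrict] at hfs
  have : (ae (μ.restrict s)).NeBot := ae_neBot.2 (Measure.restrict_eq_zero.not.2 (hl s hs))
  obtain ⟨_, hx⟩ := hfs.prod_right_ae.exists
  exact ⟨s', hs', hx⟩

end

lemma nhdsWithin_Ioo_pole_neBot {θ₀ : ℝ} (hθ₀ : θ₀ = 0 ∨ θ₀ = π) : (𝓝[Ioo 0 π] θ₀).NeBot := by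
  rw [← mem_closure_iff_nhdsWithin_neBot, closure_Ioo pi_pos.ne]
  rcases hθ₀ with rfl | rfl
  exacts [left_mem_Icc.2 pi_pos.le, right_mem_Icc.2 pi_pos.le]

lemma not_integrableAtFilter_inv_sin {θ₀ : ℝ} (hθ₀ : θ₀ = 0 ∨ θ₀ = π) :
    ¬ IntegrableAtFilter (fun θ => (sin θ)⁻¹) (𝓝[Ioo 0 π] θ₀) := by
  rintro ⟨s, hs, hint⟩
  have : (𝓝[Ioo 0 π] θ₀).NeBot := nhdsWithin_Ioo_pole_neBot hθ₀
  have hsin : ∀ᶠ θ in 𝓝[Ioo 0 π] θ₀, sin θ ≠ 0 :=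
    eventually_mem_nhdsWithin.mono fun θ hθ => (sin_pos_of_mem_Ioo hθ).ne'
  have hderiv : ∀ᶠ θ in 𝓝[Ioo 0 π] θ₀, HasDerivAt (fun θ => log (sin θ)) (cos θ / sin θ) θ :=
    hsin.mono fun θ hθ => (hasDerivAt_sin θ).log hθ
  have hlim : Tendsto sin (𝓝[Ioo 0 π] θ₀) (𝓝[≠] 0) := by
    refine tendsto_nhdsWithin_iff.2 ⟨?_, hsin⟩
    have hsin₀ : sin θ₀ = 0 := by rcases hθ₀ with rfl | rfl <;> simp
    exact hsin₀ ▸ continuous_sin.continuousWithinAt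
  refine not_integrableOn_of_tendsto_norm_atTop_of_deriv_isBigO_filter
    (f := fun θ => log (sin θ)) (𝓝[Ioo 0 π] θ₀) hs (hderiv.mono fun θ h => h.differentiableAt)
    (tendsto_abs_atBot_atTop.comp (tendsto_log_nhdsNE_zero.comp hlim)) ?_ hint
  refine Asymptotics.IsBigO.of_bound 1 (hderiv.mono fun θ h => ?_)
  rw [h.deriv, one_mul, div_eq_mul_inv, norm_mul]
  exact mul_le_of_le_one_left (norm_nonneg _) (abs_cos_le_one θ)

/-- The filter of approach to the point `(t₀, θ₀, φ₀)` of the coordinate cylinder, where `θ₀` is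
typically a pole, through points with `θ ∈ (0, π)`. -/
def nhdsOffPoles (t₀ θ₀ φ₀ : ℝ) : Filter (ℝ × ℝ × ℝ) :=
  𝓝 t₀ ×ˢ 𝓝[Ioo 0 π] θ₀ ×ˢ 𝓝 φ₀

section

variable {t₀ θ₀ φ₀ : ℝ} {F H : ℝ × ℝ × ℝ → ℝ}

lemma nhdsOffPoles_eq_nhdsWithin :
    nhdsOffPoles t₀ θ₀ φ₀ = 𝓝[univ ×ˢ Ioo 0 π ×ˢ univ] (t₀, θ₀, φ₀) := by
  rw [nhdsWithin_prod_eq, nhdsWithin_prod_eq, nhdsWithin_univ, nhdsWithin_univ, nhdsOffPoles]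

lemma eventually_mem_nhdsOffPoles {I W : Set ℝ} (hI : I ∈ 𝓝 t₀) (hW : W ∈ 𝓝 φ₀) :
    ∀ᶠ p in nhdsOffPoles t₀ θ₀ φ₀, p.1 ∈ I ∧ p.2.1 ∈ Ioo 0 π ∧ p.2.2 ∈ W :=
  prod_mem_prod hI (prod_mem_prod self_mem_nhdsWithin hW)

lemma tendsto_nhdsOffPoles {I : Set ℝ} (hF : ContinuousOn F (I ×ˢ Icc 0 π ×ˢ univ))
    (hI : I ∈ 𝓝 t₀) (hθ₀ : θ₀ ∈ Icc 0 π) :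
    Tendsto F (nhdsOffPoles t₀ θ₀ φ₀) (𝓝 (F (t₀, θ₀, φ₀))) := by
  refine (hF (t₀, θ₀, φ₀) ⟨mem_of_mem_nhds hI, hθ₀, mem_univ φ₀⟩).tendsto.mono_left ?_
  refine le_inf (nhdsOffPoles_eq_nhdsWithin.trans_le inf_le_left) (le_principal_iff.2 ?_)
  filter_upwards [eventually_mem_nhdsOffPoles hI univ_mem] with p ⟨ht, hθ, hφ⟩
  exact ⟨ht, Ioo_subset_Icc_self hθ, hφ⟩

lemma not_integrableAtFilter_of_inv_sin_le {c : ℝ} (hθ₀ : θ₀ = 0 ∨ θ₀ = π) (hc : 0 < c)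
    (hle : ∀ᶠ p in nhdsOffPoles t₀ θ₀ φ₀, c * (sin p.2.1)⁻¹ ≤ H p) :
    ¬ IntegrableAtFilter H (nhdsOffPoles t₀ θ₀ φ₀) := by
  intro hH
  have hnhds (x : ℝ) : ∀ s ∈ 𝓝 x, volume s ≠ 0 := fun s hs =>
    (Measure.measure_pos_of_mem_nhds volume hs).ne'
  have : (nhdsOffPoles t₀ θ₀ φ₀).IsMeasurablyGenerated := nhdsOffPoles_eq_nhdsWithin ▸
    (MeasurableSet.univ.prod (measurableSet_Ioo.prod .univ)).nhdsWithin_isMeasurablyGenerated _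
  have hbigO : (fun p : ℝ × ℝ × ℝ => (sin p.2.1)⁻¹) =O[nhdsOffPoles t₀ θ₀ φ₀] H := by
    refine Asymptotics.IsBigO.of_bound c⁻¹ ?_
    filter_upwards [hle, eventually_mem_nhdsOffPoles univ_mem univ_mem] with p hp ⟨_, hθ, _⟩
    have hsin : 0 ≤ (sin p.2.1)⁻¹ := inv_nonneg.2 (sin_pos_of_mem_Ioo hθ).le
    rw [norm_of_nonneg hsin, ← div_eq_inv_mul, le_div_iff₀ hc, mul_comm]
    exact hp.trans (le_abs_self _)
  have hint : IntegrableAtFilter (fun p : ℝ × ℝ × ℝ => (sin p.2.1)⁻¹) (nhdsOffPoles t₀ θ₀ φ₀) :=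
    hbigO.integrableAtFilter ⟨univ, univ_mem,
      (by fun_prop : Measurable fun p : ℝ × ℝ × ℝ => (sin p.2.1)⁻¹).aestronglyMeasurable⟩ hH
  exact not_integrableAtFilter_inv_sin hθ₀ (integrableAtFilter_of_comp_fst (hnhds φ₀)
    (integrableAtFilter_of_comp_snd (f := fun q : ℝ × ℝ => (sin q.1)⁻¹) (hnhds t₀) hint))

lemma eq_zero_of_tendsto_nhdsOffPoles {y k : ℝ} {n : ℕ} (hθ₀ : θ₀ = 0 ∨ θ₀ = π)
    (hF : Tendsto F (nhdsOffPoles t₀ θ₀ φ₀) (𝓝 y)) (hk : 0 < k)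
    (hle : ∀ᶠ p in nhdsOffPoles t₀ θ₀ φ₀, k * |F p| ^ n * (sin p.2.1)⁻¹ ≤ H p)
    (hH : IntegrableAtFilter H (nhdsOffPoles t₀ θ₀ φ₀)) : y = 0 := by
  by_contra hy
  have hy' : 0 < |y| := abs_pos.2 hy
  refine not_integrableAtFilter_of_inv_sin_le hθ₀ (c := k * (|y| / 2) ^ n) (by positivity) ?_ hH
  filter_upwards [hle, hF.abs.eventually (lt_mem_nhds (half_lt_self hy')),
    eventually_mem_nhdsOffPoles univ_mem univ_mem] with p hp hFp ⟨_, hθ, _⟩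
  have := sin_pos_of_mem_Ioo hθ
  exact le_trans (by gcongr) hp

end

/-! ### Parametric integrals -/

section

variable {a b : ℝ}

lemma continuousOn_intervalIntegral_of_continuousOn_prod {X : Type*} [TopologicalSpace X]
    {s : Set X} {q : X → ℝ → ℝ} (hab : a ≤ b)
    (hq : ContinuousOn (fun p : X × ℝ => q p.1 p.2) (s ×ˢ Icc a b)) :
    ContinuousOn (fun x => ∫ y in a..b, q x y) s := by
  rw [continuousOn_iff_continuous_domRestrict]
  have hext : Continuous fun p : s × ℝ => q p.1 (projIcc a b hab p.2) :=
    hq.comp_continuous (f := fun p : s × ℝ => ((p.1 : X), (projIcc a b hab p.2 : ℝ)))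
      ((continuous_subtype_val.comp continuous_fst).prodMk
        (continuous_subtype_val.comp (continuous_projIcc.comp continuous_snd)))
      fun p => ⟨p.1.2, (projIcc a b hab p.2).2⟩
  refine (intervalIntegral.continuous_parametric_intervalIntegral_of_continuous' (μ := volume)
    (f := fun (x : s) y => q x (projIcc a b hab y)) hext a b).congr fun x => ?_
  refine intervalIntegral.integral_congr fun y hy => ?_
  rw [uIcc_of_le hab] at hy
  simp only [projIcc_of_mem hab hy]

lemma hasDerivAt_intervalIntegral_of_continuousOn_prod {U : Set ℝ} {q q' : ℝ → ℝ → ℝ} {x₀ : ℝ}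
    (hU : U ∈ 𝓝 x₀) (hab : a ≤ b)
    (hq : ContinuousOn (fun p : ℝ × ℝ => q p.1 p.2) (U ×ˢ Icc a b))
    (hq' : ContinuousOn (fun p : ℝ × ℝ => q' p.1 p.2) (U ×ˢ Icc a b))
    (hderiv : ∀ x ∈ U, ∀ y ∈ Icc a b, HasDerivAt (fun x => q x y) (q' x y) x) :
    HasDerivAt (fun x => ∫ y in a..b, q x y) (∫ y in a..b, q' x₀ y) x₀ := by
  obtain ⟨r, hr, hrU⟩ := Metric.nhds_basis_closedBall.mem_iff.1 hU
  obtain ⟨C, hC⟩ := ((isCompact_closedBall x₀ r).prod isCompact_Icc).exists_bound_of_continuousOn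
    (hq'.mono (prod_mono_left hrU))
  have hslice {f : ℝ → ℝ → ℝ} (hf : ContinuousOn (fun p : ℝ × ℝ => f p.1 p.2) (U ×ˢ Icc a b))
      {x : ℝ} (hx : x ∈ U) : IntervalIntegrable (f x) volume a b :=
    ContinuousOn.intervalIntegrable_of_Icc hab
      (hf.comp (f := fun y => (x, y)) (by fun_prop) fun y hy => ⟨hx, hy⟩)
  have hmeas {f : ℝ → ℝ → ℝ} (hf : ContinuousOn (fun p : ℝ × ℝ => f p.1 p.2) (U ×ˢ Icc a b))
      {x : ℝ} (hx : x ∈ U) : AEStronglyMeasurable (f x) (volume.restrict (Set.uIoc a b)) :=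
    (hslice hf hx).def'.aestronglyMeasurable
  have hIcc {y : ℝ} (hy : y ∈ Set.uIoc a b) : y ∈ Icc a b := by
    rw [uIoc_of_le hab] at hy
    exact Ioc_subset_Icc_self hy
  exact (intervalIntegral.hasDerivAt_integral_of_dominated_loc_of_deriv_le (bound := fun _ => C)
    (Metric.closedBall_mem_nhds x₀ hr) (eventually_of_mem hU fun x hx => hmeas hq hx)
    (hslice hq (mem_of_mem_nhds hU)) (hmeas hq' (mem_of_mem_nhds hU))
    (.of_forall fun y hy x hx => hC (x, y) ⟨hx, hIcc hy⟩) intervalIntegrable_const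
    (.of_forall fun y hy x hx => hderiv x (hrU hx) y (hIcc hy))).2

end

/-! ### Differentiation under an integral up to vanishing boundary flux -/

section

variable {a b ε C : ℝ} {g : ℝ → ℝ}

lemma integrableOn_Ioo_of_abs_le (hg : ContinuousOn g (Ioo a b))
    (hbound : ∀ x ∈ Ioo a b, |g x| ≤ C) : IntegrableOn g (Ioo a b) :=
  .of_bound measure_Ioo_lt_top (hg.aestronglyMeasurable measurableSet_Ioo) C
    ((ae_restrict_mem measurableSet_Ioo).mono hbound)

lemma abs_integral_Ioo_sub_intervalIntegral_le (hg : ContinuousOn g (Ioo a b))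
    (hbound : ∀ x ∈ Ioo a b, |g x| ≤ C) (hε : 0 < ε) (hεab : a + ε ≤ b - ε) :
    |(∫ x in Ioo a b, g x) - ∫ x in (a + ε)..(b - ε), g x| ≤ C * (2 * ε) := by
  have hsub : Ioc (a + ε) (b - ε) ⊆ Ioo a b := fun x hx => ⟨by linarith [hx.1], by linarith [hx.2]⟩
  rw [intervalIntegral.integral_of_le hεab, ← setIntegral_sdiff measurableSet_Ioc
    (integrableOn_Ioo_of_abs_le hg hbound) hsub]
  refine (norm_setIntegral_le_of_norm_le_const (f := g)
    ((measure_mono sdiff_subset).trans_lt measure_Ioo_lt_top)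
    fun x hx => hbound x hx.1).trans_eq ?_
  rw [measureReal_sdiff hsub measurableSet_Ioc measure_Ioo_lt_top.ne,
    Real.volume_real_Ioo_of_le (by linarith), Real.volume_real_Ioc_of_le hεab]
  ring

lemma abs_integral_Ioo_sub_intervalIntegral_add_flux_le {β : ℝ → ℝ}
    (hg : ContinuousOn g (Ioo a b))
    (hbound : ∀ x ∈ Ioo a b, |g x| ≤ C ∧ |β x| ≤ C * (x - a) ∧ |β x| ≤ C * (b - x)) (hε : 0 < ε)
    (hεab : a + ε ≤ b - ε) :
    |(∫ x in Ioo a b, g x) - ((∫ x in (a + ε)..(b - ε), g x) + (β (b - ε) - β (a + ε)))|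
      ≤ 4 * C * ε := by
  have hcaps := abs_integral_Ioo_sub_intervalIntegral_le hg (fun x hx => (hbound x hx).1) hε hεab
  have hβa := (hbound (a + ε) ⟨by linarith, by linarith⟩).2.1
  have hβb := (hbound (b - ε) ⟨by linarith, by linarith⟩).2.2
  rw [add_sub_cancel_left] at hβa
  rw [sub_sub_cancel] at hβb
  rw [abs_le] at hcaps hβa hβb ⊢
  constructor <;> linarith

end

section

variable {I : Set ℝ} {a b : ℝ} {f f' k B : ℝ → ℝ → ℝ} {t₀ : ℝ}

lemma hasDerivAt_intervalIntegral_of_flux {c d : ℝ} (hcd : c ≤ d) (hI : I ∈ 𝓝 t₀)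
    (hf : ContinuousOn (fun p : ℝ × ℝ => f p.1 p.2) (I ×ˢ Icc c d))
    (hf' : ContinuousOn (fun p : ℝ × ℝ => f' p.1 p.2) (I ×ˢ Icc c d))
    (hk : ContinuousOn (k t₀) (Icc c d))
    (hderiv : ∀ t ∈ I, ∀ x ∈ Icc c d, HasDerivAt (fun s => f s x) (f' t x) t)
    (hflux : ∀ x ∈ Icc c d, HasDerivAt (B t₀) (f' t₀ x - k t₀ x) x) :
    HasDerivAt (fun t => ∫ x in c..d, f t x) ((∫ x in c..d, k t₀ x) + (B t₀ d - B t₀ c)) t₀ := by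
  have hf't₀ : ContinuousOn (f' t₀) (Icc c d) :=
    hf'.comp (f := fun x => (t₀, x)) (by fun_prop) fun x hx => ⟨mem_of_mem_nhds hI, hx⟩
  have hkint := hk.intervalIntegrable_of_Icc (μ := volume) hcd
  have hf'int := hf't₀.intervalIntegrable_of_Icc (μ := volume) hcd
  have hftc : ∫ x in c..d, (f' t₀ x - k t₀ x) = B t₀ d - B t₀ c :=
    intervalIntegral.integral_eq_sub_of_hasDerivAt (fun x hx => hflux x (uIcc_of_le hcd ▸ hx))
      (hf'int.sub hkint)
  rw [← hftc, intervalIntegral.integral_sub hf'int hkint, add_sub_cancel]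
  exact hasDerivAt_intervalIntegral_of_continuousOn_prod hI hcd hf hf' hderiv

lemma hasDerivAt_integral_Ioo_of_flux (hab : a < b) (hI : IsOpen I)
    (hf : ContinuousOn (fun p : ℝ × ℝ => f p.1 p.2) (I ×ˢ Ioo a b))
    (hf' : ContinuousOn (fun p : ℝ × ℝ => f' p.1 p.2) (I ×ˢ Ioo a b))
    (hk : ∀ t ∈ I, ContinuousOn (k t) (Ioo a b))
    (hderiv : ∀ t ∈ I, ∀ x ∈ Ioo a b, HasDerivAt (fun s => f s x) (f' t x) t)
    (hflux : ∀ t ∈ I, ∀ x ∈ Ioo a b, HasDerivAt (B t) (f' t x - k t x) x)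
    (hbound : ∀ K ⊆ I, IsCompact K → ∃ C, ∀ t ∈ K, ∀ x ∈ Ioo a b,
      |f t x| ≤ C ∧ |k t x| ≤ C ∧ |B t x| ≤ C * (x - a) ∧ |B t x| ≤ C * (b - x))
    (ht₀ : t₀ ∈ I) :
    HasDerivAt (fun t => ∫ x in Ioo a b, f t x) (∫ x in Ioo a b, k t₀ x) t₀ := by
  obtain ⟨r, hr, hrI⟩ := Metric.nhds_basis_closedBall.mem_iff.1 (hI.mem_nhds ht₀)
  obtain ⟨C, hC⟩ := hbound _ hrI (isCompact_closedBall t₀ r)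
  have hball {t : ℝ} (ht : t ∈ Metric.ball t₀ r) : t ∈ I := hrI (Metric.ball_subset_closedBall ht)
  have hft {t : ℝ} (ht : t ∈ I) : ContinuousOn (f t) (Ioo a b) :=
    hf.comp (f := fun x => (t, x)) (by fun_prop) fun x hx => ⟨ht, hx⟩
  have hsmall : ∀ᶠ ε in 𝓝[>] (0 : ℝ), 0 < ε ∧ ε ≤ (b - a) / 2 :=
    Ioc_mem_nhdsGT (half_pos (sub_pos.2 hab))
  have hlim {D : ℝ} : Tendsto (fun ε => D * ε) (𝓝[>] 0) (𝓝 0) := by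
    simpa using (tendsto_id.const_mul D).mono_left (nhdsWithin_le_nhds (a := (0 : ℝ)))
  refine hasDerivAt_of_tendstoUniformlyOn (l := 𝓝[>] (0 : ℝ))
    (f := fun ε t => ∫ x in (a + ε)..(b - ε), f t x)
    (f' := fun ε t => (∫ x in (a + ε)..(b - ε), k t x) + (B t (b - ε) - B t (a + ε)))
    (g' := fun t => ∫ x in Ioo a b, k t x)
    Metric.isOpen_ball ?_ ?_ ?_ (Metric.mem_ball_self hr)
  · rw [Metric.tendstoUniformlyOn_iff]
    intro δ hδ
    filter_upwards [hsmall, (hlim (D := 4 * C)).eventually (gt_mem_nhds hδ)]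
      with ε ⟨hε, hεab⟩ hδε t ht
    exact (abs_integral_Ioo_sub_intervalIntegral_add_flux_le (hk t (hball ht))
      (fun x hx => (hC t (Metric.ball_subset_closedBall ht) x hx).2) hε (by linarith)).trans_lt hδε
  · filter_upwards [hsmall] with ε ⟨hε, hεab⟩ t ht
    have hsub : Icc (a + ε) (b - ε) ⊆ Ioo a b := Icc_subset_Ioo (by linarith) (by linarith)
    have htI := hball ht
    exact hasDerivAt_intervalIntegral_of_flux (by linarith) (hI.mem_nhds htI)
      (hf.mono (prod_mono_right hsub)) (hf'.mono (prod_mono_right hsub))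
      ((hk t htI).mono hsub) (fun t ht x hx => hderiv t ht x (hsub hx))
      fun x hx => hflux t htI x (hsub hx)
  · intro t ht
    rw [tendsto_iff_norm_sub_tendsto_zero]
    refine squeeze_zero' (.of_forall fun _ => norm_nonneg _) ?_ (hlim (D := 2 * C))
    filter_upwards [hsmall] with ε ⟨hε, hεab⟩
    rw [norm_sub_rev]
    exact (abs_integral_Ioo_sub_intervalIntegral_le (hft (hball ht))
      (fun x hx => (hC t (Metric.ball_subset_closedBall ht) x hx).1) hε
        (by linarith)).trans_eq (by ring)

end

/-! ### Order of vanishing at the poles -/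

/-- `F` vanishes at both poles of every slice `{t} × S²`, `t ∈ I`. The values on the meridian
`φ = 0` are irrelevant for integrals and are left out. -/
def VanishesAtPoles (I : Set ℝ) (F : ℝ → ℝ → ℝ → ℝ) : Prop :=
  ∀ t ∈ I, ∀ θ₀, θ₀ = 0 ∨ θ₀ = π → ∀ φ ∈ Ioo 0 (2 * π), F t θ₀ φ = 0

/-- `F = O((sin θ)^k)` on `I × S²`, locally uniformly in `t ∈ I`. As in `VanishesAtPoles`, the
meridian `φ = 0` is left out. -/
def IsBigOSin (k : ℤ) (I : Set ℝ) (F : ℝ → ℝ → ℝ → ℝ) : Prop :=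
  ∀ K ⊆ I, IsCompact K → ∃ C, 0 ≤ C ∧
    ∀ t ∈ K, ∀ θ ∈ Ioo 0 π, ∀ φ ∈ Ioo 0 (2 * π), |F t θ φ| ≤ C * sin θ ^ k

namespace IsBigOSin

variable {I : Set ℝ} {F G : ℝ → ℝ → ℝ → ℝ} {j k : ℤ}

lemma of_abs_le (hF : IsBigOSin k I F)
    (h : ∀ t ∈ I, ∀ θ ∈ Ioo 0 π, ∀ φ ∈ Ioo 0 (2 * π), |G t θ φ| ≤ |F t θ φ|) :
    IsBigOSin k I G := by
  intro K hKI hK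
  obtain ⟨C, hC, hbound⟩ := hF K hKI hK
  exact ⟨C, hC, fun t ht θ hθ φ hφ => (h t (hKI ht) θ hθ φ hφ).trans (hbound t ht θ hθ φ hφ)⟩

lemma congr (hF : IsBigOSin k I F)
    (h : ∀ t ∈ I, ∀ θ ∈ Ioo 0 π, ∀ φ ∈ Ioo 0 (2 * π), G t θ φ = F t θ φ) : IsBigOSin k I G :=
  hF.of_abs_le fun t ht θ hθ φ hφ => (congrArg abs (h t ht θ hθ φ hφ)).le

lemma of_const_bound {C : ℝ} (hC : 0 ≤ C)
    (h : ∀ t ∈ I, ∀ θ ∈ Ioo 0 π, ∀ φ ∈ Ioo 0 (2 * π), |F t θ φ| ≤ C * sin θ ^ k) :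
    IsBigOSin k I F :=
  fun _ hKI _ => ⟨C, hC, fun t ht => h t (hKI ht)⟩

lemma sin_zpow (k : ℤ) : IsBigOSin k I fun _ θ _ => sin θ ^ k :=
  of_const_bound zero_le_one fun _ _ _ hθ _ _ => by
    rw [one_mul, abs_of_pos (zpow_pos (sin_pos_of_mem_Ioo hθ) k)]

protected lemma cos : IsBigOSin 0 I fun _ θ _ => cos θ :=
  of_const_bound zero_le_one fun _ _ θ _ _ _ => by simpa using abs_cos_le_one θ

lemma mono (hF : IsBigOSin k I F) (hjk : j ≤ k) : IsBigOSin j I F := by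
  intro K hKI hK
  obtain ⟨C, hC, hbound⟩ := hF K hKI hK
  refine ⟨C, hC, fun t ht θ hθ φ hφ => (hbound t ht θ hθ φ hφ).trans ?_⟩
  gcongr C * ?_
  exact zpow_le_zpow_right_of_le_one₀ (sin_pos_of_mem_Ioo hθ) (sin_le_one θ) hjk

lemma mul (hF : IsBigOSin j I F) (hG : IsBigOSin k I G) :
    IsBigOSin (j + k) I fun t θ φ => F t θ φ * G t θ φ := by
  intro K hKI hK
  obtain ⟨C, hC, hFC⟩ := hF K hKI hK
  obtain ⟨D, hD, hGD⟩ := hG K hKI hK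
  refine ⟨C * D, by positivity, fun t ht θ hθ φ hφ => ?_⟩
  have hs := sin_pos_of_mem_Ioo hθ
  rw [abs_mul, zpow_add₀ hs.ne', mul_mul_mul_comm]
  exact mul_le_mul (hFC t ht θ hθ φ hφ) (hGD t ht θ hθ φ hφ) (abs_nonneg _) (by positivity)

lemma add (hF : IsBigOSin k I F) (hG : IsBigOSin k I G) :
    IsBigOSin k I fun t θ φ => F t θ φ + G t θ φ := by
  intro K hKI hK
  obtain ⟨C, hC, hFC⟩ := hF K hKI hK
  obtain ⟨D, hD, hGD⟩ := hG K hKI hK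
  refine ⟨C + D, by positivity, fun t ht θ hθ φ hφ => ?_⟩
  rw [add_mul]
  exact (abs_add_le _ _).trans (add_le_add (hFC t ht θ hθ φ hφ) (hGD t ht θ hθ φ hφ))

lemma const_mul (c : ℝ) (hF : IsBigOSin k I F) : IsBigOSin k I fun t θ φ => c * F t θ φ := by
  intro K hKI hK
  obtain ⟨C, hC, hbound⟩ := hF K hKI hK
  refine ⟨|c| * C, by positivity, fun t ht θ hθ φ hφ => ?_⟩
  rw [abs_mul, mul_assoc]
  exact mul_le_mul_of_nonneg_left (hbound t ht θ hθ φ hφ) (abs_nonneg c)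

lemma sub (hF : IsBigOSin k I F) (hG : IsBigOSin k I G) :
    IsBigOSin k I fun t θ φ => F t θ φ - G t θ φ :=
  (hF.add (hG.const_mul (-1))).congr fun _ _ _ _ _ _ => by ring

lemma tendsto_nhdsOffPoles (hF : IsBigOSin 1 I F) (hI : IsOpen I) {t₀ θ₀ φ₀ : ℝ}
    (ht₀ : t₀ ∈ I) (hθ₀ : θ₀ = 0 ∨ θ₀ = π) (hφ₀ : φ₀ ∈ Ioo 0 (2 * π)) :
    Tendsto (fun p : ℝ × ℝ × ℝ => F p.1 p.2.1 p.2.2) (nhdsOffPoles t₀ θ₀ φ₀) (𝓝 0) := by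
  obtain ⟨K, hK, hKt, hKI⟩ := exists_compact_subset hI ht₀
  obtain ⟨C, -, hbound⟩ := hF K hKI hK
  have hsin : Tendsto (fun p : ℝ × ℝ × ℝ => C * sin p.2.1) (nhdsOffPoles t₀ θ₀ φ₀) (𝓝 0) := by
    have hθ₀' : C * sin θ₀ = 0 := by rcases hθ₀ with rfl | rfl <;> simp
    have hcont : Continuous fun p : ℝ × ℝ × ℝ => C * sin p.2.1 := by fun_prop
    exact hθ₀' ▸ (hcont.tendsto (t₀, θ₀, φ₀)).mono_left
      (nhdsOffPoles_eq_nhdsWithin.trans_le nhdsWithin_le_nhds)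
  refine squeeze_zero_norm' ?_ hsin
  filter_upwards [eventually_mem_nhdsOffPoles (mem_interior_iff_mem_nhds.1 hKt)
    (Ioo_mem_nhds hφ₀.1 hφ₀.2)] with p ⟨ht, hθ, hφ⟩
  simpa using hbound p.1 ht p.2.1 hθ p.2.2 hφ

end IsBigOSin

section

variable {I : Set ℝ} {F : ℝ → ℝ → ℝ → ℝ} {t θ φ : ℝ}

lemma mem_Icc_of_pole {θ₀ : ℝ} (hθ₀ : θ₀ = 0 ∨ θ₀ = π) : θ₀ ∈ Icc 0 π := by
  rcases hθ₀ with rfl | rfl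
  exacts [left_mem_Icc.2 pi_pos.le, right_mem_Icc.2 pi_pos.le]

lemma VanishesAtPoles.cdt (hF : VanishesAtPoles I F) (hI : IsOpen I) : VanishesAtPoles I (cdt F) :=
  fun t ht θ₀ hθ₀ φ hφ => HasDerivAt.deriv <| (hasDerivAt_const t 0).congr_of_eventuallyEq <|
    (hI.eventually_mem ht).mono fun s hs => hF s hs θ₀ hθ₀ φ hφ

lemma VanishesAtPoles.cdφ (hF : VanishesAtPoles I F) : VanishesAtPoles I (cdφ F) :=
  fun t ht θ₀ hθ₀ φ hφ => HasDerivAt.deriv <| (hasDerivAt_const φ 0).congr_of_eventuallyEq <|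
    (isOpen_Ioo.eventually_mem hφ).mono fun x hx => hF t ht θ₀ hθ₀ x hx

lemma cdθWithin_Icc_eq_cdθ (F : ℝ → ℝ → ℝ → ℝ) (t : ℝ) (hθ : θ ∈ Ioo 0 π) (φ : ℝ) :
    cdθWithin (Icc 0 π) F t θ φ = cdθ F t θ φ :=
  derivWithin_of_mem_nhds (Icc_mem_nhds hθ.1 hθ.2)

lemma cdθ_cdθWithin (F : ℝ → ℝ → ℝ → ℝ) (t : ℝ) (hθ : θ ∈ Ioo 0 π) (φ : ℝ) :
    cdθ (cdθWithin (Icc 0 π) F) t θ φ = cdθ (cdθ F) t θ φ :=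
  EventuallyEq.deriv_eq <| (isOpen_Ioo.eventually_mem hθ).mono fun _ hx =>
    cdθWithin_Icc_eq_cdθ F t hx φ

namespace ContDiffOnCyl

lemma cdt_cdθWithin_comm (hF : ContDiffOnCyl 2 I (Icc 0 π) F) (hI : IsOpen I) (ht : t ∈ I)
    (hθ : θ ∈ Icc 0 π) (φ : ℝ) :
    cdt (cdθWithin (Icc 0 π) F) t θ φ
      = cdθWithin (Icc 0 π) (cdt F) t θ φ := by
  have hJ : UniqueDiffOn ℝ (Icc 0 π) := uniqueDiffOn_Icc pi_pos
  have htθ : ContinuousOn (fun x => cdt (cdθWithin (Icc 0 π) F) t x φ) (Icc 0 π) :=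
    (((hF.cdθWithin (m := 1) hI hJ (by norm_num)).cdt (m := 0) hI hJ
      (by norm_num)).contDiffOn_θ ht φ).continuousOn
  have hθt : ContinuousOn (fun x => cdθWithin (Icc 0 π) (cdt F) t x φ) (Icc 0 π) :=
    (((hF.cdt (m := 1) hI hJ (by norm_num)).cdθWithin (m := 0) hI hJ
      (by norm_num)).contDiffOn_θ ht φ).continuousOn
  refine EqOn.of_subset_closure (s := Ioo 0 π) (fun x hx => ?_) htθ hθt Ioo_subset_Icc_self
    (closure_Ioo pi_pos.ne).ge hθ
  rw [cdθWithin_Icc_eq_cdθ _ _ hx, ← (hF.mono Ioo_subset_Icc_self).cdt_cdθ_comm hI isOpen_Ioo ht hx]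
  exact congrArg (deriv · t) (funext fun s => cdθWithin_Icc_eq_cdθ F s hx φ)

lemma isBigOSin_zero (hF : ContDiffOnCyl 0 I (Icc 0 π) F) : IsBigOSin 0 I F := by
  intro K hKI hK
  obtain ⟨C, hC⟩ := (hK.prod (isCompact_Icc.prod isCompact_Icc)).exists_bound_of_continuousOn
    (hF.continuousOn.mono (prod_mono hKI (prod_mono_right (subset_univ (Icc 0 (2 * π))))))
  refine ⟨max C 0, le_max_right _ _, fun t ht θ hθ φ hφ => ?_⟩
  rw [zpow_zero, mul_one]
  exact (hC (t, θ, φ) ⟨ht, Ioo_subset_Icc_self hθ, Ioo_subset_Icc_self hφ⟩).trans (le_max_left _ _)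

lemma isBigOSin_succ {k : ℕ} (hF : ContDiffOnCyl 1 I (Icc 0 π) F) (hF0 : VanishesAtPoles I F)
    (hF' : IsBigOSin k I (cdθWithin (Icc 0 π) F)) : IsBigOSin (k + 1) I F := by
  intro K hKI hK
  obtain ⟨C, hC, hbound⟩ := hF' K hKI hK
  refine ⟨2 * C, by positivity, fun t ht θ hθ φ hφ => ?_⟩
  exact_mod_cast abs_le_mul_sin_pow_succ hC (hF.contDiffOn_θ (hKI ht) φ).continuousOn
    (fun x hx => (hF.hasDerivWithinAt_θ one_ne_zero (hKI ht) (Ioo_subset_Icc_self hx) φ).hasDerivAt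
      (Icc_mem_nhds hx.1 hx.2))
    (fun x hx => by exact_mod_cast hbound t ht x hx φ hφ) (hF0 t (hKI ht) 0 (.inl rfl) φ hφ)
    (hF0 t (hKI ht) π (.inr rfl) φ hφ) hθ

lemma isBigOSin_one (hF : ContDiffOnCyl 1 I (Icc 0 π) F) (hI : IsOpen I)
    (hF0 : VanishesAtPoles I F) : IsBigOSin 1 I F :=
  hF.isBigOSin_succ (k := 0) hF0
    (hF.cdθWithin hI (uniqueDiffOn_Icc pi_pos) (by norm_num)).isBigOSin_zero

lemma isBigOSin_two (hF : ContDiffOnCyl 2 I (Icc 0 π) F) (hI : IsOpen I)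
    (hF0 : VanishesAtPoles I F) (hF0' : VanishesAtPoles I (cdθWithin (Icc 0 π) F)) :
    IsBigOSin 2 I F :=
  (hF.of_le one_le_two).isBigOSin_succ (k := 1) hF0
    ((hF.cdθWithin hI (uniqueDiffOn_Icc pi_pos) (by norm_num)).isBigOSin_one hI hF0')

lemma eventually_mul_sin_le_abs (hF : ContDiffOnCyl 1 I (Icc 0 π) F) (hI : IsOpen I)
    (hF0 : VanishesAtPoles I F) {t₀ θ₀ φ₀ c : ℝ} (ht₀ : t₀ ∈ I) (hθ₀ : θ₀ = 0 ∨ θ₀ = π)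
    (hφ₀ : φ₀ ∈ Ioo 0 (2 * π)) (hcF : c < |cdθWithin (Icc 0 π) F t₀ θ₀ φ₀|) :
    ∀ᶠ p in nhdsOffPoles t₀ θ₀ φ₀, c * sin p.2.1 ≤ |F p.1 p.2.1 p.2.2| := by
  have hnear := ((hF.cdθWithin (m := 0) hI (uniqueDiffOn_Icc pi_pos)
    (by norm_num)).continuousOn (t₀, θ₀, φ₀) ⟨ht₀, mem_Icc_of_pole hθ₀, mem_univ _⟩).abs.eventually
      (lt_mem_nhds hcF)
  obtain ⟨δ, hδ, hball⟩ := Metric.mem_nhdsWithin_iff.1 hnear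
  have hclose : ∀ᶠ p in nhdsOffPoles t₀ θ₀ φ₀, p ∈ Metric.ball (t₀, θ₀, φ₀) δ :=
    (nhdsOffPoles_eq_nhdsWithin.trans_le nhdsWithin_le_nhds) (Metric.ball_mem_nhds _ hδ)
  filter_upwards [eventually_mem_nhdsOffPoles (hI.mem_nhds ht₀) (Ioo_mem_nhds hφ₀.1 hφ₀.2), hclose]
  rintro ⟨t, θ, φ⟩ ⟨ht, hθ, hφ⟩ hp
  simp only [Metric.mem_ball, Prod.dist_eq, max_lt_iff, Real.dist_eq] at hp
  obtain ⟨ξ, hξ, hξθ, hslope⟩ := exists_abs_eq_abs_deriv_mul (hF.contDiffOn_θ ht φ).continuousOn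
    (fun x hx => (hF.hasDerivWithinAt_θ one_ne_zero ht (Ioo_subset_Icc_self hx) φ).hasDerivAt
      (Icc_mem_nhds hx.1 hx.2)) hθ₀ (hF0 t ht θ₀ hθ₀ φ hφ) hθ
  have hξball : (t, ξ, φ) ∈ Metric.ball (t₀, θ₀, φ₀) δ := by
    simpa only [Metric.mem_ball, Prod.dist_eq, max_lt_iff, Real.dist_eq] using
      ⟨hp.1, hξθ.trans_lt hp.2.1, hp.2.2⟩
  have hcξ : c < |cdθWithin (Icc 0 π) F t ξ φ| :=
    hball ⟨hξball, ht, Ioo_subset_Icc_self hξ, mem_univ φ⟩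
  rw [hslope]
  exact mul_le_mul hcξ.le (sin_le_abs_sub_pole hθ₀ (Ioo_subset_Icc_self hθ))
    (sin_pos_of_mem_Ioo hθ).le (abs_nonneg _)

end ContDiffOnCyl

end

/-! ### Renormalizers -/

namespace Renormalizer

variable {I : Set ℝ} {A₁ : ℝ} (R : Renormalizer I A₁) {t θ : ℝ}

/-- `ln ω`. -/
def logω : ℝ → ℝ → ℝ → ℝ := fun t θ φ => log (R.ω t θ φ)

/-- `ln ω − ln sin θ`, the part of `ln ω` that extends to the poles. -/
def regularLog : ℝ → ℝ → ℝ → ℝ := fun t θ φ => log (R.ω t θ φ) - log (sin θ)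

/-- The renormalizer does not depend on `t ∈ I`. -/
def IsStationary : Prop := ∀ t ∈ I, ∀ t' ∈ I, ∀ θ φ, R.ω t θ φ = R.ω t' θ φ

lemma contDiffOnCyl_logω : ContDiffOnCyl 3 I (Ioo 0 π) R.logω :=
  contDiffOn_infty.1 (R.smooth.log fun p hp => (R.pos p.1 hp.1 p.2.1 hp.2.1 p.2.2).ne') 3

lemma contDiffOnCyl_regularLog : ContDiffOnCyl 3 I (Ioo 0 π) R.regularLog :=
  ContDiffOn.sub R.contDiffOnCyl_logω <|
    (contDiff_sin.comp (contDiff_fst.comp contDiff_snd)).contDiffOn.log fun _ hp =>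
      (sin_pos_of_mem_Ioo hp.2.1).ne'

lemma abs_deriv_regularLog_le {m l n : ℕ} (hmln : m + l + n ≤ 10) (ht : t ∈ I)
    (hθ : θ ∈ Ioo 0 π) (φ : ℝ) :
    |(cdt^[m] (cdθ^[l] (cdφ^[n] R.regularLog))) t θ φ| ≤ A₁ := by
  obtain ⟨G, -, hG, hGA⟩ := R.deriv_ext m l n hmln
  exact hG t ht θ hθ φ ▸ hGA t ht θ (Ioo_subset_Icc_self hθ) φ

lemma cdφ_regularLog : cdφ R.regularLog = cdφ R.logω :=
  funext fun _ => funext fun _ => funext fun _ => deriv_sub_const _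

lemma cdθ_logω (ht : t ∈ I) (hθ : θ ∈ Ioo 0 π) (φ : ℝ) :
    cdθ R.logω t θ φ = cdθ R.regularLog t θ φ + cos θ / sin θ := by
  have hψ := R.contDiffOnCyl_regularLog.hasDerivAt_θ three_ne_zero ht (isOpen_Ioo.mem_nhds hθ) φ
  have hlog := (hasDerivAt_sin θ).log (sin_pos_of_mem_Ioo hθ).ne'
  exact ((hψ.add hlog).congr_of_eventuallyEq <| .of_forall fun x => by
    simp [regularLog, logω]).deriv

lemma cdθ_cdθ_logω (hI : IsOpen I) (ht : t ∈ I) (hθ : θ ∈ Ioo 0 π) (φ : ℝ) :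
    cdθ (cdθ R.logω) t θ φ = cdθ (cdθ R.regularLog) t θ φ - (sin θ ^ 2)⁻¹ := by
  have hs : sin θ ≠ 0 := (sin_pos_of_mem_Ioo hθ).ne'
  have hψ := (R.contDiffOnCyl_regularLog.cdθ (m := 2) hI isOpen_Ioo (by norm_num)).hasDerivAt_θ
    two_ne_zero ht (isOpen_Ioo.mem_nhds hθ) φ
  have hcot : HasDerivAt (fun x => cos x / sin x) (-(sin θ ^ 2)⁻¹) θ :=
    ((hasDerivAt_cos θ).div (hasDerivAt_sin θ) hs).congr_deriv <| by
      rw [← one_div, neg_div', div_left_inj' (pow_ne_zero 2 hs)]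
      linarith [sin_sq_add_cos_sq θ]
  exact ((hψ.add hcot).congr_of_eventuallyEq <| (isOpen_Ioo.eventually_mem hθ).mono fun x hx =>
    R.cdθ_logω ht hx φ).deriv.trans (sub_eq_add_neg _ _).symm

-- The `θ`-part of `Δ ln sin θ` is `-1`, so only derivatives of `regularLog` remain.
lemma abs_polar_laplacian_logω_mul_sin_le (hI : IsOpen I) (ht : t ∈ I) (hθ : θ ∈ Ioo 0 π)
    (φ : ℝ) :
    |(cdθ (cdθ R.logω) t θ φ + cos θ / sin θ * cdθ R.logω t θ φ) * sin θ| ≤ 3 * A₁ := by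
  have hs := sin_pos_of_mem_Ioo hθ
  have hψ' : |cdθ R.regularLog t θ φ| ≤ A₁ :=
    R.abs_deriv_regularLog_le (m := 0) (l := 1) (n := 0) (by norm_num) ht hθ φ
  have hψ'' : |cdθ (cdθ R.regularLog) t θ φ| ≤ A₁ :=
    R.abs_deriv_regularLog_le (m := 0) (l := 2) (n := 0) (by norm_num) ht hθ φ
  have hexpand : (cdθ (cdθ R.logω) t θ φ + cos θ / sin θ * cdθ R.logω t θ φ) * sin θ
      = cdθ (cdθ R.regularLog) t θ φ * sin θ + cdθ R.regularLog t θ φ * cos θ - sin θ := by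
    rw [R.cdθ_cdθ_logω hI ht hθ, R.cdθ_logω ht hθ]
    field_simp
    linear_combination sin_sq_add_cos_sq θ
  have h1 : |cdθ (cdθ R.regularLog) t θ φ * sin θ| ≤ A₁ := (abs_mul _ _).trans_le <|
    (mul_le_of_le_one_right (abs_nonneg _) (abs_sin_le_one θ)).trans hψ''
  have h2 : |cdθ R.regularLog t θ φ * cos θ| ≤ A₁ := (abs_mul _ _).trans_le <|
    (mul_le_of_le_one_right (abs_nonneg _) (abs_cos_le_one θ)).trans hψ'
  rw [hexpand]
  rw [abs_le] at h1 h2 ⊢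
  constructor <;> linarith [R.A₁_ge, sin_le_one θ]

lemma exists_continuousOn_eq_cdφ_cdφ_logω : ∃ G : ℝ → ℝ → ℝ → ℝ,
    ContDiffOnCyl 0 I (Icc 0 π) G ∧
      ∀ t ∈ I, ∀ θ ∈ Ioo 0 π, ∀ φ, G t θ φ = cdφ (cdφ R.logω) t θ φ := by
  obtain ⟨G, hGc, hG, -⟩ := R.deriv_ext 0 0 2 (by norm_num)
  exact ⟨G, contDiffOn_zero.2 hGc, fun t ht θ hθ φ =>
    (hG t ht θ hθ φ).trans (congrArg (fun F => cdφ F t θ φ) R.cdφ_regularLog)⟩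

lemma abs_cdθ_cdφ_cdφ_logω_le (ht : t ∈ I) (hθ : θ ∈ Ioo 0 π) (φ : ℝ) :
    |cdθ (cdφ (cdφ R.logω)) t θ φ| ≤ A₁ := by
  rw [← R.cdφ_regularLog]
  exact R.abs_deriv_regularLog_le (m := 0) (l := 1) (n := 2) (by norm_num) ht hθ φ

lemma abs_log_ω_div_sin_le (ht : t ∈ I) (hθ : θ ∈ Ioo 0 π) (φ : ℝ) :
    |log (R.ω t θ φ / sin θ)| ≤ A₁ := by
  rw [log_div (R.pos t ht θ hθ φ).ne' (sin_pos_of_mem_Ioo hθ).ne']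
  exact R.abs_deriv_regularLog_le (m := 0) (l := 0) (n := 0) (by norm_num) ht hθ φ

lemma ω_le (ht : t ∈ I) (hθ : θ ∈ Ioo 0 π) (φ : ℝ) : R.ω t θ φ ≤ exp A₁ * sin θ := by
  have hs := sin_pos_of_mem_Ioo hθ
  rw [← div_le_iff₀ hs, ← log_le_iff_le_exp (div_pos (R.pos t ht θ hθ φ) hs)]
  exact (abs_le.1 (R.abs_log_ω_div_sin_le ht hθ φ)).2

lemma le_ω (ht : t ∈ I) (hθ : θ ∈ Ioo 0 π) (φ : ℝ) : exp (-A₁) * sin θ ≤ R.ω t θ φ := by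
  have hs := sin_pos_of_mem_Ioo hθ
  rw [← le_div_iff₀ hs, ← le_log_iff_exp_le (div_pos (R.pos t ht θ hθ φ) hs)]
  exact (abs_le.1 (R.abs_log_ω_div_sin_le ht hθ φ)).1

lemma inv_ω_pow_four_le (ht : t ∈ I) (hθ : θ ∈ Ioo 0 π) (φ : ℝ) :
    (R.ω t θ φ ^ 4)⁻¹ ≤ exp (4 * A₁) * (sin θ ^ 4)⁻¹ := by
  have hs := sin_pos_of_mem_Ioo hθ
  calc (R.ω t θ φ ^ 4)⁻¹ ≤ ((exp (-A₁) * sin θ) ^ 4)⁻¹ := by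
        gcongr
        exact R.le_ω ht hθ φ
    _ = exp (4 * A₁) * (sin θ ^ 4)⁻¹ := by
        rw [mul_pow, ← exp_nat_mul, mul_inv, ← exp_neg]
        norm_num

lemma le_inv_ω_pow_four (ht : t ∈ I) (hθ : θ ∈ Ioo 0 π) (φ : ℝ) :
    exp (-(4 * A₁)) * (sin θ ^ 4)⁻¹ ≤ (R.ω t θ φ ^ 4)⁻¹ := by
  have hω := R.pos t ht θ hθ φ
  calc exp (-(4 * A₁)) * (sin θ ^ 4)⁻¹ = ((exp A₁ * sin θ) ^ 4)⁻¹ := by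
        rw [mul_pow, ← exp_nat_mul, mul_inv, ← exp_neg]
        norm_num
    _ ≤ (R.ω t θ φ ^ 4)⁻¹ := by
        gcongr
        exact R.ω_le ht hθ φ

variable {R}

lemma IsStationary.logω_eq (hR : R.IsStationary) {t' : ℝ} (ht : t ∈ I) (ht' : t' ∈ I) :
    R.logω t = R.logω t' :=
  funext fun θ => funext fun φ => congrArg log (hR t ht t' ht' θ φ)

lemma IsStationary.cdt_logω (hR : R.IsStationary) (hI : IsOpen I) (ht : t ∈ I) (θ φ : ℝ) :
    cdt R.logω t θ φ = 0 :=
  HasDerivAt.deriv <| (hasDerivAt_const t (R.logω t θ φ)).congr_of_eventuallyEq <|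
    (hI.eventually_mem ht).mono fun _ hs => congrFun₂ (hR.logω_eq hs ht) θ φ

lemma IsStationary.cL_logω (hR : R.IsStationary) (hI : IsOpen I) (ht : t ∈ I) (θ φ : ℝ) :
    cL R.logω t θ φ = lapS2 (R.logω t) θ φ := by
  have htt : cdt (cdt R.logω) t θ φ = 0 :=
    HasDerivAt.deriv <| (hasDerivAt_const t 0).congr_of_eventuallyEq <|
      (hI.eventually_mem ht).mono fun s hs => hR.cdt_logω hI hs θ φ
  rw [cL, htt, hR.cdt_logω hI ht, sub_zero, zero_add]

end Renormalizer

/-! ### Behaviour of finite-energy solutions at the poles -/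

lemma cgradNormSq_eq (F : ℝ → ℝ → ℝ → ℝ) (t θ φ : ℝ) :
    cgradNormSq F t θ φ
      = cdt F t θ φ ^ 2 + (cdθ F t θ φ ^ 2 + (sin θ ^ 2)⁻¹ * cdφ F t θ φ ^ 2) := by
  simp only [cgradNormSq, cgradDot, gradDotS2, cdθ, cdφ]
  ring

lemma cgradNormSq_nonneg (F : ℝ → ℝ → ℝ → ℝ) (t θ φ : ℝ) : 0 ≤ cgradNormSq F t θ φ := by
  rw [cgradNormSq_eq]
  positivity

namespace RHMSolution

variable {I : Set ℝ} {A₁ Λ a : ℝ} {R : Renormalizer I A₁} (S : RHMSolution I A₁ R Λ a)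

/-- `u = Φ − ln ω`. -/
def u : ℝ → ℝ → ℝ → ℝ := fun t θ φ => S.Φ t θ φ - log (R.ω t θ φ)

/-- The factor `e^{4u}`. -/
def weight : ℝ → ℝ → ℝ → ℝ := fun t θ φ => exp (4 * S.u t θ φ)

/-- The integrand of the local energy bound `energy_loc`. -/
def energyDensity : ℝ × ℝ × ℝ → ℝ := fun p =>
  (cgradNormSq S.Φ p.1 p.2.1 p.2.2 + (R.ω p.1 p.2.1 p.2.2 ^ 4)⁻¹ * cgradNormSq S.v p.1 p.2.1 p.2.2)
    * sin p.2.1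

lemma contDiffOnCyl_Φ : ContDiffOnCyl 3 I (Icc 0 π) S.Φ := S.regΦ

lemma contDiffOnCyl_v : ContDiffOnCyl 3 I (Icc 0 π) S.v := S.regv

section

variable {t θ : ℝ}

lemma weight_nonneg (t θ φ : ℝ) : 0 ≤ S.weight t θ φ := (exp_pos _).le

lemma weight_le (ht : t ∈ I) (hθ : θ ∈ Ioo 0 π) (φ : ℝ) :
    S.weight t θ φ ≤ exp (4 * Λ) * (R.ω t θ φ ^ 4)⁻¹ := by
  have hω := R.pos t ht θ hθ φ
  have hΦ := (abs_le.1 (S.bddΦ t ht θ (Ioo_subset_Icc_self hθ) φ)).2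
  have hexp : exp (4 * log (R.ω t θ φ)) = R.ω t θ φ ^ 4 := by
    rw [← Nat.cast_ofNat, ← log_pow, exp_log (pow_pos hω 4)]
  rw [weight, u, mul_sub, exp_sub, hexp, div_eq_mul_inv]
  gcongr

lemma isBigOSin_weight : IsBigOSin (-4) I S.weight := by
  refine .of_const_bound (C := exp (4 * Λ) * exp (4 * A₁)) (by positivity) ?_
  intro t ht θ hθ φ _
  rw [abs_of_nonneg (S.weight_nonneg t θ φ), mul_assoc]
  exact (S.weight_le ht hθ φ).trans
    (mul_le_mul_of_nonneg_left (R.inv_ω_pow_four_le ht hθ φ) (exp_pos _).le)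

lemma cdφ_Φ_sq_le_energyDensity (hθ : θ ∈ Ioo 0 π) (t φ : ℝ) :
    |cdφ S.Φ t θ φ| ^ 2 * (sin θ)⁻¹ ≤ S.energyDensity (t, θ, φ) := by
  have hs := sin_pos_of_mem_Ioo hθ
  have hΦ : (sin θ ^ 2)⁻¹ * cdφ S.Φ t θ φ ^ 2 ≤ cgradNormSq S.Φ t θ φ := by
    rw [cgradNormSq_eq]
    linarith [sq_nonneg (cdt S.Φ t θ φ), sq_nonneg (cdθ S.Φ t θ φ)]
  calc |cdφ S.Φ t θ φ| ^ 2 * (sin θ)⁻¹ = (sin θ ^ 2)⁻¹ * cdφ S.Φ t θ φ ^ 2 * sin θ := by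
        rw [sq_abs]; field_simp
    _ ≤ S.energyDensity (t, θ, φ) := by
        refine mul_le_mul_of_nonneg_right (hΦ.trans (le_add_of_nonneg_right ?_)) hs.le
        exact mul_nonneg (inv_nonneg.2 (by positivity)) (cgradNormSq_nonneg S.v t θ φ)

lemma cdθ_v_sq_le_energyDensity (ht : t ∈ I) (hθ : θ ∈ Ioo 0 π) (φ : ℝ) :
    exp (-(4 * A₁)) * |cdθ S.v t θ φ| ^ 2 * (sin θ ^ 3)⁻¹ ≤ S.energyDensity (t, θ, φ) := by
  have hs := sin_pos_of_mem_Ioo hθ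
  have hv : cdθ S.v t θ φ ^ 2 ≤ cgradNormSq S.v t θ φ := by
    rw [cgradNormSq_eq]
    linarith [sq_nonneg (cdt S.v t θ φ),
      mul_nonneg (inv_nonneg.2 (sq_nonneg (sin θ))) (sq_nonneg (cdφ S.v t θ φ))]
  calc exp (-(4 * A₁)) * |cdθ S.v t θ φ| ^ 2 * (sin θ ^ 3)⁻¹
      = exp (-(4 * A₁)) * (sin θ ^ 4)⁻¹ * cdθ S.v t θ φ ^ 2 * sin θ := by rw [sq_abs]; field_simp
    _ ≤ S.energyDensity (t, θ, φ) := by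
        refine mul_le_mul_of_nonneg_right (le_add_of_nonneg_of_le (cgradNormSq_nonneg _ _ _ _) ?_)
          hs.le
        exact mul_le_mul (R.le_inv_ω_pow_four ht hθ φ) hv (sq_nonneg _)
          (inv_nonneg.2 (by positivity))

lemma weight_mul_cgradNormSq_v_le_energyDensity (ht : t ∈ I) (hθ : θ ∈ Ioo 0 π) (φ : ℝ) :
    exp (-(4 * Λ)) * (S.weight t θ φ * cgradNormSq S.v t θ φ) * sin θ
      ≤ S.energyDensity (t, θ, φ) := by
  have hs := sin_pos_of_mem_Ioo hθ
  have hω : exp (-(4 * Λ)) * S.weight t θ φ ≤ (R.ω t θ φ ^ 4)⁻¹ := by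
    rw [exp_neg, inv_mul_le_iff₀ (exp_pos _)]
    exact S.weight_le ht hθ φ
  rw [← mul_assoc]
  exact mul_le_mul_of_nonneg_right (le_add_of_nonneg_of_le (cgradNormSq_nonneg _ _ _ _)
    (mul_le_mul_of_nonneg_right hω (cgradNormSq_nonneg _ _ _ _))) hs.le

end

lemma integrableAtFilter_energyDensity (hI : IsOpen I) {t₀ θ₀ φ₀ : ℝ} (ht₀ : t₀ ∈ I)
    (hφ₀ : φ₀ ∈ Ioo 0 (2 * π)) :
    IntegrableAtFilter S.energyDensity (nhdsOffPoles t₀ θ₀ φ₀) := by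
  obtain ⟨K, hK, hKt, hKI⟩ := exists_compact_subset hI ht₀
  exact ⟨K ×ˢ Ioo 0 π ×ˢ Ioo 0 (2 * π),
    eventually_mem_nhdsOffPoles (mem_interior_iff_mem_nhds.1 hKt) (Ioo_mem_nhds hφ₀.1 hφ₀.2),
    S.energy_loc K hKI hK⟩

lemma vanishesAtPoles_of_le_energyDensity {F : ℝ → ℝ → ℝ → ℝ} {k : ℝ} {n : ℕ} (hI : IsOpen I)
    (hF : ContDiffOnCyl 0 I (Icc 0 π) F) (hk : 0 < k)
    (hle : ∀ t ∈ I, ∀ θ ∈ Ioo 0 π, ∀ φ,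
      k * |F t θ φ| ^ n * (sin θ)⁻¹ ≤ S.energyDensity (t, θ, φ)) : VanishesAtPoles I F := by
  intro t₀ ht₀ θ₀ hθ₀ φ₀ hφ₀
  refine eq_zero_of_tendsto_nhdsOffPoles (n := n) hθ₀
    (tendsto_nhdsOffPoles hF.continuousOn (hI.mem_nhds ht₀) (mem_Icc_of_pole hθ₀)) hk ?_
    (S.integrableAtFilter_energyDensity hI ht₀ hφ₀)
  filter_upwards [eventually_mem_nhdsOffPoles (hI.mem_nhds ht₀) univ_mem] with p ⟨ht, hθ, _⟩
  exact hle p.1 ht p.2.1 hθ p.2.2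

lemma vanishesAtPoles_cdφ_Φ (hI : IsOpen I) : VanishesAtPoles I (cdφ S.Φ) :=
  S.vanishesAtPoles_of_le_energyDensity (n := 2) hI
    (S.contDiffOnCyl_Φ.cdφ hI (uniqueDiffOn_Icc pi_pos) (by norm_num)) one_pos
    fun t _ θ hθ φ => by simpa only [one_mul] using S.cdφ_Φ_sq_le_energyDensity hθ t φ

lemma vanishesAtPoles_cdθWithin_v (hI : IsOpen I) :
    VanishesAtPoles I (cdθWithin (Icc 0 π) S.v) := by
  refine S.vanishesAtPoles_of_le_energyDensity (n := 2) hI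
    (S.contDiffOnCyl_v.cdθWithin hI (uniqueDiffOn_Icc pi_pos) (by norm_num))
    (exp_pos (-(4 * A₁))) fun t ht θ hθ φ => ?_
  have hs := sin_pos_of_mem_Ioo hθ
  rw [cdθWithin_Icc_eq_cdθ S.v t hθ φ]
  refine le_trans ?_ (S.cdθ_v_sq_le_energyDensity ht hθ φ)
  gcongr
  exact pow_le_of_le_one hs.le (sin_le_one θ) three_ne_zero

lemma vanishesAtPoles_cdθWithin_cdθWithin_v (hI : IsOpen I) :
    VanishesAtPoles I (cdθWithin (Icc 0 π) (cdθWithin (Icc 0 π) S.v)) := by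
  intro t₀ ht₀ θ₀ hθ₀ φ₀ hφ₀
  by_contra hne
  set y := cdθWithin (Icc 0 π) (cdθWithin (Icc 0 π) S.v) t₀ θ₀ φ₀
  have hy : 0 < |y| := abs_pos.2 hne
  refine not_integrableAtFilter_of_inv_sin_le hθ₀ (c := exp (-(4 * A₁)) * (|y| / 2) ^ 2)
    (by positivity) ?_ (S.integrableAtFilter_energyDensity hI ht₀ hφ₀)
  have hlinear := (S.contDiffOnCyl_v.cdθWithin hI (uniqueDiffOn_Icc pi_pos)
    (by norm_num)).eventually_mul_sin_le_abs hI (S.vanishesAtPoles_cdθWithin_v hI) ht₀ hθ₀ hφ₀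
      (half_lt_self hy)
  filter_upwards [hlinear, eventually_mem_nhdsOffPoles (hI.mem_nhds ht₀) univ_mem]
    with p hp ⟨ht, hθ, _⟩
  have hs := sin_pos_of_mem_Ioo hθ
  rw [cdθWithin_Icc_eq_cdθ S.v p.1 hθ p.2.2] at hp
  calc exp (-(4 * A₁)) * (|y| / 2) ^ 2 * (sin p.2.1)⁻¹
      = exp (-(4 * A₁)) * (|y| / 2 * sin p.2.1) ^ 2 * (sin p.2.1 ^ 3)⁻¹ := by field_simp
    _ ≤ exp (-(4 * A₁)) * |cdθ S.v p.1 p.2.1 p.2.2| ^ 2 * (sin p.2.1 ^ 3)⁻¹ := by gcongr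
    _ ≤ S.energyDensity p := S.cdθ_v_sq_le_energyDensity ht hθ p.2.2

lemma vanishesAtPoles_cdt_v (hI : IsOpen I) : VanishesAtPoles I (cdt S.v) := by
  intro t ht θ₀ hθ₀ φ _
  obtain ⟨c, hc⟩ : ∃ c, ∀ s ∈ I, S.v s θ₀ φ = c := by
    rcases hθ₀ with rfl | rfl
    exacts [⟨a, fun s hs => S.traceN s hs φ⟩, ⟨-a, fun s hs => S.traceS s hs φ⟩]
  exact HasDerivAt.deriv <| (hasDerivAt_const t c).congr_of_eventuallyEq <|
    (hI.eventually_mem ht).mono hc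

lemma vanishesAtPoles_cdθWithin_cdt_v (hI : IsOpen I) :
    VanishesAtPoles I (cdθWithin (Icc 0 π) (cdt S.v)) := by
  intro t ht θ₀ hθ₀ φ hφ
  rw [← (S.contDiffOnCyl_v.of_le (by norm_num)).cdt_cdθWithin_comm hI ht (mem_Icc_of_pole hθ₀)]
  exact (S.vanishesAtPoles_cdθWithin_v hI).cdt hI t ht θ₀ hθ₀ φ hφ

end RHMSolution

/-! ### Order of the energy densities at the poles -/

namespace ContDiffOnCyl

variable {I : Set ℝ} {F : ℝ → ℝ → ℝ → ℝ}

lemma isBigOSin_cdθ (hF : ContDiffOnCyl 1 I (Icc 0 π) F) (hI : IsOpen I) :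
    IsBigOSin 0 I (cdθ F) :=
  (hF.cdθWithin hI (uniqueDiffOn_Icc pi_pos) (by norm_num)).isBigOSin_zero.congr
    fun t _ _ hθ φ _ => (cdθWithin_Icc_eq_cdθ F t hθ φ).symm

lemma isBigOSin_cdθ_cdθ (hF : ContDiffOnCyl 2 I (Icc 0 π) F) (hI : IsOpen I) :
    IsBigOSin 0 I (cdθ (cdθ F)) :=
  ((hF.cdθWithin hI (uniqueDiffOn_Icc pi_pos) (by norm_num)).isBigOSin_cdθ hI).congr
    fun t _ _ hθ φ _ => (cdθ_cdθWithin F t hθ φ).symm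

end ContDiffOnCyl

/-- The `θ`-component of `x ∇y` with respect to `dθ dφ`. -/
def gradFluxθ (x y : ℝ → ℝ → ℝ → ℝ) : ℝ → ℝ → ℝ → ℝ := fun t θ φ =>
  sin θ * (x t θ φ * cdθ y t θ φ)

/-- The `φ`-component of `x ∇y` with respect to `dθ dφ`. -/
def gradFluxφ (x y : ℝ → ℝ → ℝ → ℝ) : ℝ → ℝ → ℝ → ℝ := fun t θ φ =>
  (sin θ)⁻¹ * (x t θ φ * cdφ y t θ φ)

lemma Renormalizer.isBigOSin_polar_laplacian_logω {I : Set ℝ} {A₁ : ℝ} (R : Renormalizer I A₁)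
    (hI : IsOpen I) :
    IsBigOSin (-1) I fun t θ φ =>
      cdθ (cdθ R.logω) t θ φ + cos θ / sin θ * cdθ R.logω t θ φ := by
  refine .of_const_bound (C := 3 * A₁) (by linarith [R.A₁_ge]) fun t ht θ hθ φ _ => ?_
  have hs := sin_pos_of_mem_Ioo hθ
  rw [zpow_neg_one, ← div_eq_mul_inv, le_div_iff₀ hs, ← abs_of_pos hs, ← abs_mul, abs_of_pos hs]
  exact R.abs_polar_laplacian_logω_mul_sin_le hI ht hθ φ

namespace RHMSolution

variable {I : Set ℝ} {A₁ Λ a : ℝ} {R : Renormalizer I A₁} (S : RHMSolution I A₁ R Λ a)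

lemma isBigOSin_cdt_Φ (hI : IsOpen I) : IsBigOSin 0 I (cdt S.Φ) :=
  (S.contDiffOnCyl_Φ.cdt hI (uniqueDiffOn_Icc pi_pos) (by norm_num)).isBigOSin_zero

lemma isBigOSin_cdt_cdt_Φ (hI : IsOpen I) : IsBigOSin 0 I (cdt (cdt S.Φ)) :=
  ((S.contDiffOnCyl_Φ.cdt (m := 2) hI (uniqueDiffOn_Icc pi_pos) (by norm_num)).cdt hI
    (uniqueDiffOn_Icc pi_pos) (by norm_num)).isBigOSin_zero

lemma isBigOSin_cdθ_Φ (hI : IsOpen I) : IsBigOSin 0 I (cdθ S.Φ) :=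
  (S.contDiffOnCyl_Φ.of_le (by norm_num)).isBigOSin_cdθ hI

lemma isBigOSin_cdφ_Φ (hI : IsOpen I) : IsBigOSin 1 I (cdφ S.Φ) :=
  (S.contDiffOnCyl_Φ.cdφ hI (uniqueDiffOn_Icc pi_pos) (by norm_num)).isBigOSin_one hI
    (S.vanishesAtPoles_cdφ_Φ hI)

lemma isBigOSin_cdφ_cdφ_Φ (hI : IsOpen I) : IsBigOSin 1 I (cdφ (cdφ S.Φ)) :=
  ((S.contDiffOnCyl_Φ.cdφ (m := 2) hI (uniqueDiffOn_Icc pi_pos) (by norm_num)).cdφ hI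
    (uniqueDiffOn_Icc pi_pos) (by norm_num)).isBigOSin_one hI (S.vanishesAtPoles_cdφ_Φ hI).cdφ

lemma isBigOSin_cdt_v (hI : IsOpen I) : IsBigOSin 2 I (cdt S.v) :=
  (S.contDiffOnCyl_v.cdt hI (uniqueDiffOn_Icc pi_pos) (by norm_num)).isBigOSin_two hI
    (S.vanishesAtPoles_cdt_v hI) (S.vanishesAtPoles_cdθWithin_cdt_v hI)

lemma isBigOSin_cdθ_v (hI : IsOpen I) : IsBigOSin 2 I (cdθ S.v) :=
  ((S.contDiffOnCyl_v.cdθWithin hI (uniqueDiffOn_Icc pi_pos) (by norm_num)).isBigOSin_two hI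
    (S.vanishesAtPoles_cdθWithin_v hI) (S.vanishesAtPoles_cdθWithin_cdθWithin_v hI)).congr
      fun t _ _ hθ φ _ => (cdθWithin_Icc_eq_cdθ S.v t hθ φ).symm

section

variable {t θ : ℝ}

lemma lapS2_eq_of_isStationary (hR : R.IsStationary) (hI : IsOpen I) (ht : t ∈ I)
    (hθ : θ ∈ Ioo 0 π) (φ : ℝ) :
    cdt (cdt S.Φ) t θ φ - cdt S.Φ t θ φ + lapS2 (S.Φ t) θ φ
      = 2 * S.weight t θ φ * cgradNormSq S.v t θ φ + lapS2 (R.logω t) θ φ := by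
  rw [← hR.cL_logω hI ht]
  exact S.eqΦ t ht θ hθ φ

/-- The right-hand side of the equation for `Φ` multiplied by `sin² θ`, which clears the
denominators of the spherical Laplacian. -/
def sourceMulSinSq : ℝ → ℝ → ℝ → ℝ := fun t θ φ =>
  2 * (S.weight t θ φ * cgradNormSq S.v t θ φ) * sin θ ^ 2

lemma sourceMulSinSq_add_cdφ_cdφ_logω (hR : R.IsStationary) (hI : IsOpen I) (ht : t ∈ I)
    (hθ : θ ∈ Ioo 0 π) (φ : ℝ) :
    S.sourceMulSinSq t θ φ + cdφ (cdφ R.logω) t θ φ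
      = sin θ ^ (2 : ℤ) * (cdt (cdt S.Φ) t θ φ - cdt S.Φ t θ φ + cdθ (cdθ S.Φ) t θ φ)
        + sin θ ^ (1 : ℤ) * (cos θ * cdθ S.Φ t θ φ) + cdφ (cdφ S.Φ) t θ φ
        - sin θ ^ (2 : ℤ)
          * (cdθ (cdθ R.logω) t θ φ + cos θ / sin θ * cdθ R.logω t θ φ) := by
  have hs : sin θ ≠ 0 := (sin_pos_of_mem_Ioo hθ).ne'
  have heq := S.lapS2_eq_of_isStationary hR hI ht hθ φ
  simp only [lapS2] at heq
  simp only [sourceMulSinSq, cdθ, cdφ, zpow_ofNat]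
  field_simp at heq ⊢
  linear_combination -heq

end

lemma isBigOSin_sourceMulSinSq_add_cdφ_cdφ_logω (hR : R.IsStationary) (hI : IsOpen I) :
    IsBigOSin 1 I fun t θ φ => S.sourceMulSinSq t θ φ + cdφ (cdφ R.logω) t θ φ := by
  have hΦθθ := (S.contDiffOnCyl_Φ.of_le (by norm_num)).isBigOSin_cdθ_cdθ hI
  have hsecond := (IsBigOSin.sin_zpow 2).mul
    (((S.isBigOSin_cdt_cdt_Φ hI).sub (S.isBigOSin_cdt_Φ hI)).add hΦθθ)
  have hfirst := (IsBigOSin.sin_zpow 1).mul (IsBigOSin.cos.mul (S.isBigOSin_cdθ_Φ hI))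
  have hlogω := (IsBigOSin.sin_zpow 2).mul (R.isBigOSin_polar_laplacian_logω hI)
  exact (((hsecond.mono (by norm_num)).add hfirst).add (S.isBigOSin_cdφ_cdφ_Φ hI)).sub hlogω
    |>.congr fun t ht θ hθ φ _ => S.sourceMulSinSq_add_cdφ_cdφ_logω hR hI ht hθ φ

lemma sourceMulSinSq_le_energyDensity {t θ : ℝ} (ht : t ∈ I) (hθ : θ ∈ Ioo 0 π) (φ : ℝ) :
    exp (-(4 * Λ)) / 2 * |S.sourceMulSinSq t θ φ| * (sin θ)⁻¹
      ≤ S.energyDensity (t, θ, φ) := by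
  have hs := sin_pos_of_mem_Ioo hθ
  have hnonneg : 0 ≤ S.sourceMulSinSq t θ φ :=
    mul_nonneg (mul_nonneg zero_le_two (mul_nonneg (S.weight_nonneg t θ φ)
      (cgradNormSq_nonneg S.v t θ φ))) (sq_nonneg _)
  refine le_of_eq_of_le ?_ (S.weight_mul_cgradNormSq_v_le_energyDensity ht hθ φ)
  rw [abs_of_nonneg hnonneg, sourceMulSinSq]
  field_simp

-- `sourceMulSinSq` has limit `-∂_φ² ln ω` at a pole, and finite energy forces this limit to be `0`.
lemma vanishesAtPoles_of_eq_cdφ_cdφ_logω (S : RHMSolution I A₁ R Λ a) (hR : R.IsStationary)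
    (hI : IsOpen I) {G : ℝ → ℝ → ℝ → ℝ}
    (hG : ContDiffOnCyl 0 I (Icc 0 π) G)
    (hGeq : ∀ t ∈ I, ∀ θ ∈ Ioo 0 π, ∀ φ, G t θ φ = cdφ (cdφ R.logω) t θ φ) :
    VanishesAtPoles I G := by
  intro t₀ ht₀ θ₀ hθ₀ φ₀ hφ₀
  have hsum := (S.isBigOSin_sourceMulSinSq_add_cdφ_cdφ_logω hR hI).tendsto_nhdsOffPoles hI
    ht₀ hθ₀ hφ₀
  have hpole := tendsto_nhdsOffPoles (φ₀ := φ₀) hG.continuousOn (hI.mem_nhds ht₀)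
    (mem_Icc_of_pole hθ₀)
  have hnear := eventually_mem_nhdsOffPoles (θ₀ := θ₀) (φ₀ := φ₀) (hI.mem_nhds ht₀) univ_mem
  have hsource : Tendsto (fun p : ℝ × ℝ × ℝ => S.sourceMulSinSq p.1 p.2.1 p.2.2)
      (nhdsOffPoles t₀ θ₀ φ₀) (𝓝 (0 - G t₀ θ₀ φ₀)) := by
    refine (hsum.sub hpole).congr' ?_
    filter_upwards [hnear] with p ⟨ht, hθ, _⟩
    rw [hGeq p.1 ht p.2.1 hθ, add_sub_cancel_right]
  have hzero : 0 - G t₀ θ₀ φ₀ = 0 :=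
    eq_zero_of_tendsto_nhdsOffPoles (n := 1) hθ₀ hsource (half_pos (exp_pos (-(4 * Λ))))
      (hnear.mono fun p hp => by
        simpa only [pow_one] using S.sourceMulSinSq_le_energyDensity hp.1 hp.2.1 p.2.2)
      (S.integrableAtFilter_energyDensity hI ht₀ hφ₀)
  linarith

lemma isBigOSin_cdφ_cdφ_logω (S : RHMSolution I A₁ R Λ a) (hR : R.IsStationary)
    (hI : IsOpen I) :
    IsBigOSin 1 I (cdφ (cdφ R.logω)) := by
  obtain ⟨G, hG, hGeq⟩ := R.exists_continuousOn_eq_cdφ_cdφ_logω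
  have hG0 := S.vanishesAtPoles_of_eq_cdφ_cdφ_logω hR hI hG hGeq
  have hA₁ : 0 ≤ A₁ := zero_le_one.trans R.A₁_ge
  refine .of_const_bound (C := 2 * A₁) (by positivity) fun t ht θ hθ φ hφ => ?_
  have hsmooth := (R.contDiffOnCyl_logω.cdφ (m := 2) hI isOpen_Ioo.uniqueDiffOn
    (by norm_num)).cdφ (m := 1) hI isOpen_Ioo.uniqueDiffOn (by norm_num)
  rw [← hGeq t ht θ hθ, zpow_one]
  simpa only [zero_add, pow_one] using abs_le_mul_sin_pow_succ (k := 0) hA₁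
    (hG.contDiffOn_θ ht φ).continuousOn
    (fun x hx => (hsmooth.hasDerivAt_θ one_ne_zero ht (isOpen_Ioo.mem_nhds hx)
      φ).congr_of_eventuallyEq <| (isOpen_Ioo.eventually_mem hx).mono fun y hy => hGeq t ht y hy φ)
    (fun x hx => by simpa using R.abs_cdθ_cdφ_cdφ_logω_le ht hx φ)
    (hG0 t ht 0 (.inl rfl) φ hφ) (hG0 t ht π (.inr rfl) φ hφ) hθ

lemma isBigOSin_weight_mul_cgradNormSq_v (hR : R.IsStationary) (hI : IsOpen I) :
    IsBigOSin (-1) I fun t θ φ => S.weight t θ φ * cgradNormSq S.v t θ φ := by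
  have hsource := (S.isBigOSin_sourceMulSinSq_add_cdφ_cdφ_logω hR hI).sub
    (S.isBigOSin_cdφ_cdφ_logω hR hI)
  refine ((IsBigOSin.sin_zpow (-2)).mul (hsource.const_mul (1 / 2))).congr
    fun t _ θ hθ φ _ => ?_
  have hs : sin θ ≠ 0 := (sin_pos_of_mem_Ioo hθ).ne'
  rw [sourceMulSinSq, zpow_neg, zpow_ofNat]
  field_simp
  ring

lemma isBigOSin_lapS2_logω (S : RHMSolution I A₁ R Λ a) (hR : R.IsStationary)
    (hI : IsOpen I) :
    IsBigOSin (-1) I fun t => lapS2 (R.logω t) :=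
  ((R.isBigOSin_polar_laplacian_logω hI).add
    (((IsBigOSin.sin_zpow (-2)).mul (S.isBigOSin_cdφ_cdφ_logω hR hI)).mono (by norm_num))).congr
      fun t _ θ _ φ _ => by
        rw [zpow_neg, zpow_ofNat]
        rfl

/-- The kinetic energy density `|∂_tΦ|² + e^{4u}|∂_t v|²`. -/
def kineticDensity : ℝ → ℝ → ℝ → ℝ := fun t θ φ =>
  cdt S.Φ t θ φ ^ 2 + S.weight t θ φ * cdt S.v t θ φ ^ 2

/-- The integrand of `2E(t)`, `E` being the renormalized energy. -/
def potentialDensity : ℝ → ℝ → ℝ → ℝ := fun t θ φ =>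
  gradNormSqS2 (S.Φ t) θ φ + S.weight t θ φ * gradNormSqS2 (S.v t) θ φ
    + 2 * lapS2 (R.logω t) θ φ * S.Φ t θ φ

/-- The `θ`-component `sin θ (∂_tΦ ∂_θΦ + e^{4u} ∂_t v ∂_θ v)`, up to sign, of the momentum flux
with respect to `dθ dφ`. -/
def polarFlux : ℝ → ℝ → ℝ → ℝ := fun t θ φ =>
  -(gradFluxθ (cdt S.Φ) S.Φ t θ φ
    + gradFluxθ (fun t θ φ => S.weight t θ φ * cdt S.v t θ φ) S.v t θ φ)

lemma isBigOSin_kineticDensity (hI : IsOpen I) : IsBigOSin 0 I S.kineticDensity :=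
  (((S.isBigOSin_cdt_Φ hI).mul (S.isBigOSin_cdt_Φ hI)).add
    (S.isBigOSin_weight.mul ((S.isBigOSin_cdt_v hI).mul (S.isBigOSin_cdt_v hI)))).congr
      fun _ _ _ _ _ _ => by simp only [kineticDensity, sq]

lemma isBigOSin_polarFlux (hI : IsOpen I) : IsBigOSin 1 I S.polarFlux :=
  (((IsBigOSin.sin_zpow 1).mul ((S.isBigOSin_cdt_Φ hI).mul (S.isBigOSin_cdθ_Φ hI))).add
    ((IsBigOSin.sin_zpow 1).mul ((S.isBigOSin_weight.mul (S.isBigOSin_cdt_v hI)).mul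
      (S.isBigOSin_cdθ_v hI)))).of_abs_le fun _ _ _ _ _ _ => by
        simp only [polarFlux, gradFluxθ, abs_neg, zpow_one, le_refl]

lemma isBigOSin_gradNormSqS2_Φ (hI : IsOpen I) :
    IsBigOSin 0 I fun t => gradNormSqS2 (S.Φ t) :=
  (((S.isBigOSin_cdθ_Φ hI).mul (S.isBigOSin_cdθ_Φ hI)).add ((((IsBigOSin.sin_zpow (-2)).mul
    (S.isBigOSin_cdφ_Φ hI)).mul (S.isBigOSin_cdφ_Φ hI)).mono (by norm_num))).congr
      fun t _ θ _ φ _ => by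
        rw [zpow_neg, zpow_ofNat]
        rfl

lemma isBigOSin_weight_mul_gradNormSqS2_v (hR : R.IsStationary) (hI : IsOpen I) :
    IsBigOSin (-1) I fun t θ φ => S.weight t θ φ * gradNormSqS2 (S.v t) θ φ := by
  refine (S.isBigOSin_weight_mul_cgradNormSq_v hR hI).of_abs_le fun t _ θ _ φ _ => ?_
  have hle : gradNormSqS2 (S.v t) θ φ ≤ cgradNormSq S.v t θ φ :=
    le_add_of_nonneg_left (mul_self_nonneg _)
  have hnonneg : 0 ≤ gradNormSqS2 (S.v t) θ φ := by
    rw [gradNormSqS2, gradDotS2, mul_assoc]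
    exact add_nonneg (mul_self_nonneg _) (mul_nonneg (by positivity) (mul_self_nonneg _))
  have hw := S.weight_nonneg t θ φ
  rw [abs_of_nonneg (by positivity), abs_of_nonneg (mul_nonneg hw (hnonneg.trans hle))]
  gcongr

lemma isBigOSin_potentialDensity (hR : R.IsStationary) (hI : IsOpen I) :
    IsBigOSin (-1) I S.potentialDensity := by
  have hΦ := (S.contDiffOnCyl_Φ.of_le (m := 0) (by norm_num)).isBigOSin_zero
  exact (((S.isBigOSin_gradNormSqS2_Φ hI).mono (by norm_num)).add
    (S.isBigOSin_weight_mul_gradNormSqS2_v hR hI)).add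
      (((S.isBigOSin_lapS2_logω hR hI).const_mul 2).mul hΦ)

end RHMSolution

/-! ### The divergence identity away from the poles -/

namespace ContDiffOnCyl

variable {I : Set ℝ} {F x y : ℝ → ℝ → ℝ → ℝ} {t θ : ℝ}

lemma hasDerivAt_gradNormSqS2 (hF : ContDiffOnCyl 2 I (Ioo 0 π) F) (hI : IsOpen I) (ht : t ∈ I)
    (hθ : θ ∈ Ioo 0 π) (φ : ℝ) :
    HasDerivAt (fun s => gradNormSqS2 (F s) θ φ) (2 * gradDotS2 (cdt F t) (F t) θ φ) t := by
  have hFθ := (hF.cdθ (m := 1) hI isOpen_Ioo (by norm_num)).hasDerivAt_t one_ne_zero hI ht hθ φ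
  have hFφ := (hF.cdφ (m := 1) hI isOpen_Ioo.uniqueDiffOn (by norm_num)).hasDerivAt_t one_ne_zero
    hI ht hθ φ
  rw [hF.cdt_cdθ_comm hI isOpen_Ioo ht hθ] at hFθ
  rw [hF.cdt_cdφ_comm hI isOpen_Ioo ht hθ] at hFφ
  refine ((hFθ.fun_mul hFθ).fun_add ((hFφ.const_mul (sin θ ^ 2)⁻¹).fun_mul hFφ)).congr_deriv ?_
  simp only [gradDotS2, cdθ, cdφ]
  ring

lemma contDiffOnCyl_sin {n : WithTop ℕ∞} {J : Set ℝ} : ContDiffOnCyl n I J fun _ θ _ => sin θ :=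
  (contDiff_sin.comp (contDiff_fst.comp contDiff_snd)).contDiffOn

lemma contDiffOnCyl_inv_sin {n : WithTop ℕ∞} :
    ContDiffOnCyl n I (Ioo 0 π) fun _ θ _ => (sin θ)⁻¹ :=
  ContDiffOn.inv contDiffOnCyl_sin fun _ hp => (sin_pos_of_mem_Ioo hp.2.1).ne'

protected lemma gradNormSqS2 (hF : ContDiffOnCyl 2 I (Ioo 0 π) F) (hI : IsOpen I) :
    ContDiffOnCyl 1 I (Ioo 0 π) fun t => gradNormSqS2 (F t) := by
  have hFθ : ContDiffOnCyl 1 I (Ioo 0 π) (cdθ F) := hF.cdθ hI isOpen_Ioo (by norm_num)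
  have hFφ : ContDiffOnCyl 1 I (Ioo 0 π) (cdφ F) :=
    hF.cdφ hI isOpen_Ioo.uniqueDiffOn (by norm_num)
  exact (ContDiffOn.mul hFθ hFθ).add
    ((((contDiffOnCyl_sin.pow 2).inv fun _ hp =>
      (pow_pos (sin_pos_of_mem_Ioo hp.2.1) 2).ne').mul hFφ).mul hFφ)

protected lemma lapS2 (hF : ContDiffOnCyl 3 I (Ioo 0 π) F) (hI : IsOpen I) :
    ContDiffOnCyl 1 I (Ioo 0 π) fun t => lapS2 (F t) := by
  have hsin : ∀ p ∈ I ×ˢ Ioo 0 π ×ˢ (univ : Set ℝ), sin p.2.1 ≠ 0 := fun _ hp =>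
    (sin_pos_of_mem_Ioo hp.2.1).ne'
  have hFθ : ContDiffOnCyl 2 I (Ioo 0 π) (cdθ F) := hF.cdθ hI isOpen_Ioo (by norm_num)
  have hFφ : ContDiffOnCyl 2 I (Ioo 0 π) (cdφ F) :=
    hF.cdφ hI isOpen_Ioo.uniqueDiffOn (by norm_num)
  have hcot : ContDiffOnCyl 1 I (Ioo 0 π) fun _ θ _ => cos θ / sin θ :=
    (contDiff_cos.comp (contDiff_fst.comp contDiff_snd)).contDiffOn.div contDiffOnCyl_sin hsin
  exact ((hFθ.cdθ hI isOpen_Ioo (by norm_num)).add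
    (ContDiffOn.mul hcot (hFθ.of_le (by norm_num)))).add
    (((contDiffOnCyl_sin.pow 2).inv fun p hp => pow_ne_zero 2 (hsin p hp)).mul
      (hFφ.cdφ hI isOpen_Ioo.uniqueDiffOn (by norm_num)))

protected lemma gradFluxθ (hx : ContDiffOnCyl 1 I (Ioo 0 π) x) (hy : ContDiffOnCyl 2 I (Ioo 0 π) y)
    (hI : IsOpen I) : ContDiffOnCyl 1 I (Ioo 0 π) (gradFluxθ x y) :=
  ContDiffOn.mul contDiffOnCyl_sin (ContDiffOn.mul hx (hy.cdθ hI isOpen_Ioo (by norm_num)))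

protected lemma gradFluxφ (hx : ContDiffOnCyl 1 I (Ioo 0 π) x) (hy : ContDiffOnCyl 2 I (Ioo 0 π) y)
    (hI : IsOpen I) : ContDiffOnCyl 1 I (Ioo 0 π) (gradFluxφ x y) :=
  ContDiffOn.mul contDiffOnCyl_inv_sin
    (ContDiffOn.mul hx (hy.cdφ hI isOpen_Ioo.uniqueDiffOn (by norm_num)))

lemma cdθ_gradFluxθ_add_cdφ_gradFluxφ (hx : ContDiffOnCyl 1 I (Ioo 0 π) x)
    (hy : ContDiffOnCyl 2 I (Ioo 0 π) y) (hI : IsOpen I) (ht : t ∈ I) (hθ : θ ∈ Ioo 0 π) (φ : ℝ) :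
    cdθ (gradFluxθ x y) t θ φ + cdφ (gradFluxφ x y) t θ φ
      = sin θ * (gradDotS2 (x t) (y t) θ φ + x t θ φ * lapS2 (y t) θ φ) := by
  have hs : sin θ ≠ 0 := (sin_pos_of_mem_Ioo hθ).ne'
  have hyθ := (hy.cdθ (m := 1) hI isOpen_Ioo (by norm_num)).hasDerivAt_θ one_ne_zero ht
    (isOpen_Ioo.mem_nhds hθ) φ
  have hyφ := (hy.cdφ (m := 1) hI isOpen_Ioo.uniqueDiffOn (by norm_num)).hasDerivAt_φ one_ne_zero
    ht hθ φ
  have hfluxθ : cdθ (gradFluxθ x y) t θ φ = _ := ((hasDerivAt_sin θ).fun_mul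
    ((hx.hasDerivAt_θ one_ne_zero ht (isOpen_Ioo.mem_nhds hθ) φ).fun_mul hyθ)).deriv
  have hfluxφ : cdφ (gradFluxφ x y) t θ φ = _ :=
    (((hx.hasDerivAt_φ one_ne_zero ht hθ φ).fun_mul hyφ).const_mul (sin θ)⁻¹).deriv
  rw [hfluxθ, hfluxφ]
  simp only [gradDotS2, lapS2, cdθ, cdφ]
  field_simp
  ring

end ContDiffOnCyl

namespace RHMSolution

open ContDiffOnCyl

variable {I : Set ℝ} {A₁ Λ a : ℝ} {R : Renormalizer I A₁} (S : RHMSolution I A₁ R Λ a)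

lemma contDiffOnCyl_u : ContDiffOnCyl 3 I (Ioo 0 π) S.u :=
  ContDiffOn.sub (S.contDiffOnCyl_Φ.mono Ioo_subset_Icc_self) R.contDiffOnCyl_logω

lemma contDiffOnCyl_weight : ContDiffOnCyl 3 I (Ioo 0 π) S.weight :=
  (contDiffOn_const.mul S.contDiffOnCyl_u).exp

lemma contDiffOnCyl_cdt_Φ (hI : IsOpen I) : ContDiffOnCyl 2 I (Ioo 0 π) (cdt S.Φ) :=
  (S.contDiffOnCyl_Φ.mono Ioo_subset_Icc_self).cdt hI isOpen_Ioo.uniqueDiffOn (by norm_num)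

lemma contDiffOnCyl_cdt_v (hI : IsOpen I) : ContDiffOnCyl 2 I (Ioo 0 π) (cdt S.v) :=
  (S.contDiffOnCyl_v.mono Ioo_subset_Icc_self).cdt hI isOpen_Ioo.uniqueDiffOn (by norm_num)

lemma contDiffOnCyl_weight_mul_cdt_v (hI : IsOpen I) :
    ContDiffOnCyl 2 I (Ioo 0 π) fun t θ φ => S.weight t θ φ * cdt S.v t θ φ :=
  ContDiffOn.mul (S.contDiffOnCyl_weight.of_le (by norm_num)) (S.contDiffOnCyl_cdt_v hI)

lemma contDiffOnCyl_kineticDensity (hI : IsOpen I) :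
    ContDiffOnCyl 1 I (Ioo 0 π) S.kineticDensity :=
  ContDiffOn.of_le ((ContDiffOn.pow (S.contDiffOnCyl_cdt_Φ hI) 2).add (ContDiffOn.mul
    (S.contDiffOnCyl_weight.of_le (by norm_num)) (ContDiffOn.pow (S.contDiffOnCyl_cdt_v hI) 2)))
      one_le_two

lemma contDiffOnCyl_potentialDensity (hI : IsOpen I) :
    ContDiffOnCyl 1 I (Ioo 0 π) S.potentialDensity := by
  have hΦ : ContDiffOnCyl 2 I (Ioo 0 π) S.Φ :=
    (S.contDiffOnCyl_Φ.mono Ioo_subset_Icc_self).of_le (by norm_num)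
  have hv : ContDiffOnCyl 2 I (Ioo 0 π) S.v :=
    (S.contDiffOnCyl_v.mono Ioo_subset_Icc_self).of_le (by norm_num)
  exact ((hΦ.gradNormSqS2 hI).add (ContDiffOn.mul (S.contDiffOnCyl_weight.of_le (by norm_num))
    (hv.gradNormSqS2 hI))).add
    ((contDiffOn_const.mul (R.contDiffOnCyl_logω.lapS2 hI)).mul (hΦ.of_le one_le_two))

/-- The density `½ (|∂_tΦ|² + e^{4u}|∂_t v|²) − e(t)` with respect to `dθ dφ`, where `e` is the
integrand of the renormalized energy. -/
def stressDensity : ℝ → ℝ → ℝ → ℝ := fun t θ φ =>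
  1 / 2 * (S.kineticDensity t θ φ - S.potentialDensity t θ φ) * sin θ

/-- The `φ`-component, up to sign, of the momentum flux with respect to `dθ dφ`. -/
def azimuthalFlux : ℝ → ℝ → ℝ → ℝ := fun t θ φ =>
  -(gradFluxφ (cdt S.Φ) S.Φ t θ φ
    + gradFluxφ (fun t θ φ => S.weight t θ φ * cdt S.v t θ φ) S.v t θ φ)

lemma contDiffOnCyl_stressDensity (hI : IsOpen I) :
    ContDiffOnCyl 1 I (Ioo 0 π) S.stressDensity :=
  (contDiffOn_const.mul (ContDiffOn.sub (S.contDiffOnCyl_kineticDensity hI)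
    (S.contDiffOnCyl_potentialDensity hI))).mul contDiffOnCyl_sin

lemma contDiffOnCyl_polarFlux (hI : IsOpen I) : ContDiffOnCyl 1 I (Ioo 0 π) S.polarFlux :=
  ContDiffOn.neg <| ContDiffOn.add
    (((S.contDiffOnCyl_cdt_Φ hI).of_le one_le_two).gradFluxθ
      ((S.contDiffOnCyl_Φ.mono Ioo_subset_Icc_self).of_le (by norm_num)) hI)
    (((S.contDiffOnCyl_weight_mul_cdt_v hI).of_le one_le_two).gradFluxθ
      ((S.contDiffOnCyl_v.mono Ioo_subset_Icc_self).of_le (by norm_num)) hI)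

lemma contDiffOnCyl_azimuthalFlux (hI : IsOpen I) :
    ContDiffOnCyl 1 I (Ioo 0 π) S.azimuthalFlux :=
  ContDiffOn.neg <| ContDiffOn.add
    (((S.contDiffOnCyl_cdt_Φ hI).of_le one_le_two).gradFluxφ
      ((S.contDiffOnCyl_Φ.mono Ioo_subset_Icc_self).of_le (by norm_num)) hI)
    (((S.contDiffOnCyl_weight_mul_cdt_v hI).of_le one_le_two).gradFluxφ
      ((S.contDiffOnCyl_v.mono Ioo_subset_Icc_self).of_le (by norm_num)) hI)

variable {t θ : ℝ}

lemma gradDotS2_weight_mul_cdt_v (hI : IsOpen I) (ht : t ∈ I) (hθ : θ ∈ Ioo 0 π) (φ : ℝ) :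
    gradDotS2 (fun θ φ => S.weight t θ φ * cdt S.v t θ φ) (S.v t) θ φ
      = S.weight t θ φ * (gradDotS2 (cdt S.v t) (S.v t) θ φ
        + 4 * cdt S.v t θ φ * gradDotS2 (S.u t) (S.v t) θ φ) := by
  have hθ' : Ioo 0 π ∈ 𝓝 θ := isOpen_Ioo.mem_nhds hθ
  have hpθ : pdθ (fun θ φ => S.weight t θ φ * cdt S.v t θ φ) θ φ = _ :=
    (((S.contDiffOnCyl_u.hasDerivAt_θ three_ne_zero ht hθ' φ).const_mul 4).exp.fun_mul
      ((S.contDiffOnCyl_cdt_v hI).hasDerivAt_θ two_ne_zero ht hθ' φ)).deriv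
  have hpφ : pdφ (fun θ φ => S.weight t θ φ * cdt S.v t θ φ) θ φ = _ :=
    (((S.contDiffOnCyl_u.hasDerivAt_φ three_ne_zero ht hθ φ).const_mul 4).exp.fun_mul
      ((S.contDiffOnCyl_cdt_v hI).hasDerivAt_φ two_ne_zero ht hθ φ)).deriv
  rw [gradDotS2, hpθ, hpφ]
  simp only [gradDotS2, weight, cdθ, cdφ]
  ring

lemma cdθ_polarFlux_add_cdφ_azimuthalFlux (hI : IsOpen I) (ht : t ∈ I) (hθ : θ ∈ Ioo 0 π)
    (φ : ℝ) :
    cdθ S.polarFlux t θ φ + cdφ S.azimuthalFlux t θ φ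
      = -sin θ * (gradDotS2 (cdt S.Φ t) (S.Φ t) θ φ + cdt S.Φ t θ φ * lapS2 (S.Φ t) θ φ
        + S.weight t θ φ * (gradDotS2 (cdt S.v t) (S.v t) θ φ
          + 4 * cdt S.v t θ φ * gradDotS2 (S.u t) (S.v t) θ φ
          + cdt S.v t θ φ * lapS2 (S.v t) θ φ)) := by
  have hΦ : ContDiffOnCyl 2 I (Ioo 0 π) S.Φ :=
    (S.contDiffOnCyl_Φ.mono Ioo_subset_Icc_self).of_le (by norm_num)
  have hv : ContDiffOnCyl 2 I (Ioo 0 π) S.v :=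
    (S.contDiffOnCyl_v.mono Ioo_subset_Icc_self).of_le (by norm_num)
  have hΦt := (S.contDiffOnCyl_cdt_Φ hI).of_le one_le_two
  have hvt := (S.contDiffOnCyl_weight_mul_cdt_v hI).of_le one_le_two
  have hθ' : Ioo 0 π ∈ 𝓝 θ := isOpen_Ioo.mem_nhds hθ
  have hpolar : cdθ S.polarFlux t θ φ = _ :=
    (((hΦt.gradFluxθ hΦ hI).hasDerivAt_θ one_ne_zero ht hθ' φ).fun_add
      ((hvt.gradFluxθ hv hI).hasDerivAt_θ one_ne_zero ht hθ' φ)).fun_neg.deriv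
  have hazimuthal : cdφ S.azimuthalFlux t θ φ = _ :=
    (((hΦt.gradFluxφ hΦ hI).hasDerivAt_φ one_ne_zero ht hθ φ).fun_add
      ((hvt.gradFluxφ hv hI).hasDerivAt_φ one_ne_zero ht hθ φ)).fun_neg.deriv
  have hdivΦ := hΦt.cdθ_gradFluxθ_add_cdφ_gradFluxφ hΦ hI ht hθ φ
  have hdivv := hvt.cdθ_gradFluxθ_add_cdφ_gradFluxφ hv hI ht hθ φ
  rw [S.gradDotS2_weight_mul_cdt_v hI ht hθ φ] at hdivv
  rw [hpolar, hazimuthal]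
  linear_combination -hdivΦ - hdivv

lemma cdt_u (hR : R.IsStationary) (hI : IsOpen I) (ht : t ∈ I) (hθ : θ ∈ Ioo 0 π) (φ : ℝ) :
    cdt S.u t θ φ = cdt S.Φ t θ φ := by
  have hu : cdt S.u t θ φ = cdt S.Φ t θ φ - cdt R.logω t θ φ :=
    (((S.contDiffOnCyl_Φ.mono Ioo_subset_Icc_self).hasDerivAt_t three_ne_zero hI ht hθ φ).fun_sub
      (R.contDiffOnCyl_logω.hasDerivAt_t three_ne_zero hI ht hθ φ)).deriv
  rw [hu, hR.cdt_logω hI ht, sub_zero]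

lemma hasDerivAt_weight (hR : R.IsStationary) (hI : IsOpen I) (ht : t ∈ I) (hθ : θ ∈ Ioo 0 π)
    (φ : ℝ) :
    HasDerivAt (fun s => S.weight s θ φ) (4 * S.weight t θ φ * cdt S.Φ t θ φ) t := by
  refine ((S.contDiffOnCyl_u.hasDerivAt_t three_ne_zero hI ht hθ φ).const_mul
    4).exp.congr_deriv ?_
  rw [S.cdt_u hR hI ht hθ, weight]
  ring

lemma hasDerivAt_kineticDensity (hR : R.IsStationary) (hI : IsOpen I) (ht : t ∈ I)
    (hθ : θ ∈ Ioo 0 π) (φ : ℝ) :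
    HasDerivAt (fun s => S.kineticDensity s θ φ)
      (2 * (cdt S.Φ t θ φ * cdt (cdt S.Φ) t θ φ
        + S.weight t θ φ * (cdt S.v t θ φ * cdt (cdt S.v) t θ φ
          + 2 * cdt S.Φ t θ φ * cdt S.v t θ φ ^ 2))) t := by
  have hΦ := (S.contDiffOnCyl_cdt_Φ hI).hasDerivAt_t two_ne_zero hI ht hθ φ
  have hv := (S.contDiffOnCyl_cdt_v hI).hasDerivAt_t two_ne_zero hI ht hθ φ
  refine ((hΦ.fun_pow 2).fun_add
    ((S.hasDerivAt_weight hR hI ht hθ φ).fun_mul (hv.fun_pow 2))).congr_deriv ?_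
  ring

lemma hasDerivAt_potentialDensity (hR : R.IsStationary) (hI : IsOpen I) (ht : t ∈ I)
    (hθ : θ ∈ Ioo 0 π) (φ : ℝ) :
    HasDerivAt (fun s => S.potentialDensity s θ φ)
      (2 * (gradDotS2 (cdt S.Φ t) (S.Φ t) θ φ
        + S.weight t θ φ * (gradDotS2 (cdt S.v t) (S.v t) θ φ
          + 2 * cdt S.Φ t θ φ * gradNormSqS2 (S.v t) θ φ)
        + lapS2 (R.logω t) θ φ * cdt S.Φ t θ φ)) t := by
  have hΦ := S.contDiffOnCyl_Φ.mono (Ioo_subset_Icc_self (a := 0) (b := π))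
  have hv := S.contDiffOnCyl_v.mono (Ioo_subset_Icc_self (a := 0) (b := π))
  have hlogω : HasDerivAt (fun s => 2 * lapS2 (R.logω s) θ φ) 0 t :=
    (hasDerivAt_const t (2 * lapS2 (R.logω t) θ φ)).congr_of_eventuallyEq <|
      (hI.eventually_mem ht).mono fun s hs => by simp only [hR.logω_eq hs ht]
  refine ((((hΦ.of_le (by norm_num)).hasDerivAt_gradNormSqS2 hI ht hθ φ).fun_add
    ((S.hasDerivAt_weight hR hI ht hθ φ).fun_mul
      ((hv.of_le (by norm_num)).hasDerivAt_gradNormSqS2 hI ht hθ φ))).fun_add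
    (hlogω.fun_mul (hΦ.hasDerivAt_t three_ne_zero hI ht hθ φ))).congr_deriv ?_
  ring

/- The terms `-∂_tΦ` and `-∂_t v` of `LΦ` and `Lv` are what produces the kinetic density. -/
lemma cdt_stressDensity (hR : R.IsStationary) (hI : IsOpen I) (ht : t ∈ I) (hθ : θ ∈ Ioo 0 π)
    (φ : ℝ) :
    cdt S.stressDensity t θ φ = S.kineticDensity t θ φ * sin θ
      + (cdθ S.polarFlux t θ φ + cdφ S.azimuthalFlux t θ φ) := by
  have hstress : cdt S.stressDensity t θ φ = _ :=
    ((((S.hasDerivAt_kineticDensity hR hI ht hθ φ).fun_sub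
      (S.hasDerivAt_potentialDensity hR hI ht hθ φ)).const_mul (1 / 2)).mul_const (sin θ)).deriv
  have heqΦ := S.lapS2_eq_of_isStationary hR hI ht hθ φ
  have heqv : cdt (cdt S.v) t θ φ - cdt S.v t θ φ + lapS2 (S.v t) θ φ
      = -4 * (cdt S.u t θ φ * cdt S.v t θ φ + gradDotS2 (S.u t) (S.v t) θ φ) :=
    S.eqv t ht θ hθ φ
  have hgrad : cgradNormSq S.v t θ φ
      = cdt S.v t θ φ * cdt S.v t θ φ + gradNormSqS2 (S.v t) θ φ := rfl
  rw [S.cdt_u hR hI ht hθ] at heqv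
  rw [hgrad] at heqΦ
  rw [hstress, S.cdθ_polarFlux_add_cdφ_azimuthalFlux hI ht hθ, kineticDensity]
  linear_combination sin θ * (cdt S.Φ t θ φ * heqΦ + S.weight t θ φ * cdt S.v t θ φ * heqv)

end RHMSolution

section Periodicity

variable {F : ℝ → ℝ → ℝ → ℝ}

lemma cdt_periodic (hF : ∀ t θ, (F t θ).Periodic (2 * π)) (t θ : ℝ) :
    (cdt F t θ).Periodic (2 * π) :=
  fun φ => congrArg (deriv · t) (funext fun s => hF s θ φ)

lemma cdφ_periodic (hF : ∀ t θ, (F t θ).Periodic (2 * π)) (t θ : ℝ) :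
    (cdφ F t θ).Periodic (2 * π) :=
  fun φ => (deriv_comp_add_const ..).symm.trans (congrArg (deriv · φ) (funext (hF t θ)))

end Periodicity

namespace RHMSolution

variable {I : Set ℝ} {A₁ Λ a : ℝ} {R : Renormalizer I A₁} (S : RHMSolution I A₁ R Λ a)

lemma azimuthalFlux_periodic (t θ : ℝ) : (S.azimuthalFlux t θ).Periodic (2 * π) := fun φ => by
  simp only [azimuthalFlux, gradFluxφ, weight, u, R.periodic, S.periodicΦ t θ φ,
    cdt_periodic S.periodicΦ t θ φ, cdt_periodic S.periodicv t θ φ,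
    cdφ_periodic S.periodicΦ t θ φ, cdφ_periodic S.periodicv t θ φ]

end RHMSolution

/-! ### Integration over the sphere -/

/-- The integral of `F` with respect to `dφ` over the parallel at colatitude `θ`. -/
def parallelInt (F : ℝ → ℝ → ℝ → ℝ) (t θ : ℝ) : ℝ := ∫ φ in (0 : ℝ)..(2 * π), F t θ φ

lemma parallelInt_eq_setIntegral (F : ℝ → ℝ → ℝ → ℝ) (t θ : ℝ) :
    parallelInt F t θ = ∫ φ in Ioo 0 (2 * π), F t θ φ := by
  rw [parallelInt, intervalIntegral.integral_of_le two_pi_pos.le, integral_Ioc_eq_integral_Ioo]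

lemma sphInt_eq_integral_parallelInt (F : ℝ → ℝ → ℝ → ℝ) (t : ℝ) :
    sphInt (F t) = ∫ θ in Ioo 0 π, parallelInt (fun t θ φ => F t θ φ * sin θ) t θ := by
  simp only [sphInt, parallelInt_eq_setIntegral, integral_mul_const]

lemma IsBigOSin.abs_parallelInt_le {I K : Set ℝ} {F : ℝ → ℝ → ℝ → ℝ} {k : ℤ} (hF : IsBigOSin k I F)
    (hKI : K ⊆ I) (hK : IsCompact K) :
    ∃ C, 0 ≤ C ∧ ∀ t ∈ K, ∀ θ ∈ Ioo 0 π, |parallelInt F t θ| ≤ C * sin θ ^ k := by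
  obtain ⟨C, hC, hbound⟩ := hF K hKI hK
  refine ⟨C * (2 * π), by positivity, fun t ht θ hθ => ?_⟩
  rw [parallelInt_eq_setIntegral]
  refine (norm_setIntegral_le_of_norm_le_const (f := F t θ) measure_Ioo_lt_top
    (hbound t ht θ hθ)).trans_eq ?_
  rw [Real.volume_real_Ioo_of_le two_pi_pos.le]
  ring

namespace ContDiffOnCyl

variable {I J : Set ℝ} {F : ℝ → ℝ → ℝ → ℝ} {t θ : ℝ}

lemma continuous_φ (hF : ContDiffOnCyl 0 I J F) (ht : t ∈ I) (hθ : θ ∈ J) :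
    Continuous (F t θ) :=
  hF.continuousOn.comp_continuous (f := fun φ => (t, θ, φ)) (by fun_prop)
    fun _ => ⟨ht, hθ, mem_univ _⟩

lemma continuousOn_parallelInt (hF : ContDiffOnCyl 0 I J F) :
    ContinuousOn (fun p : ℝ × ℝ => parallelInt F p.1 p.2) (I ×ˢ J) :=
  continuousOn_intervalIntegral_of_continuousOn_prod two_pi_pos.le
    (q := fun p : ℝ × ℝ => F p.1 p.2) <|
    hF.continuousOn.comp (f := fun p : (ℝ × ℝ) × ℝ => (p.1.1, p.1.2, p.2)) (by fun_prop)
      fun _ hp => ⟨hp.1.1, hp.1.2, mem_univ _⟩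

lemma continuousOn_parallelInt_θ (hF : ContDiffOnCyl 0 I J F) (ht : t ∈ I) :
    ContinuousOn (parallelInt F t) J :=
  hF.continuousOn_parallelInt.comp (f := fun θ => (t, θ)) (by fun_prop) fun _ hx => ⟨ht, hx⟩

lemma hasDerivAt_parallelInt_t (hF : ContDiffOnCyl 1 I J F) (hI : IsOpen I)
    (hJ : UniqueDiffOn ℝ J) (ht : t ∈ I) (hθ : θ ∈ J) :
    HasDerivAt (fun s => parallelInt F s θ) (parallelInt (cdt F) t θ) t := by
  have hslice {G : ℝ → ℝ → ℝ → ℝ} (hG : ContDiffOnCyl 0 I J G) :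
      ContinuousOn (fun p : ℝ × ℝ => G p.1 θ p.2) (I ×ˢ Icc 0 (2 * π)) :=
    hG.continuousOn.comp (f := fun p : ℝ × ℝ => (p.1, θ, p.2)) (by fun_prop)
      fun _ hp => ⟨hp.1, hθ, mem_univ _⟩
  exact hasDerivAt_intervalIntegral_of_continuousOn_prod (hI.mem_nhds ht) two_pi_pos.le
    (hslice (hF.of_le zero_le_one)) (hslice (hF.cdt hI hJ (by norm_num)))
    fun s hs φ _ => hF.hasDerivAt_t one_ne_zero hI hs hθ φ

lemma hasDerivAt_parallelInt_θ (hF : ContDiffOnCyl 1 I J F) (hI : IsOpen I) (hJ : IsOpen J)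
    (ht : t ∈ I) (hθ : θ ∈ J) :
    HasDerivAt (parallelInt F t) (parallelInt (cdθ F) t θ) θ := by
  have hslice {G : ℝ → ℝ → ℝ → ℝ} (hG : ContDiffOnCyl 0 I J G) :
      ContinuousOn (fun p : ℝ × ℝ => G t p.1 p.2) (J ×ˢ Icc 0 (2 * π)) :=
    hG.continuousOn.comp (f := fun p : ℝ × ℝ => (t, p.1, p.2)) (by fun_prop)
      fun _ hp => ⟨ht, hp.1, mem_univ _⟩
  exact hasDerivAt_intervalIntegral_of_continuousOn_prod (hJ.mem_nhds hθ) two_pi_pos.le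
    (hslice (hF.of_le zero_le_one)) (hslice (hF.cdθ hI hJ (by norm_num)))
    fun x hx φ _ => hF.hasDerivAt_θ one_ne_zero ht (hJ.mem_nhds hx) φ

lemma parallelInt_cdφ_eq_zero (hF : ContDiffOnCyl 1 I J F) (hI : IsOpen I)
    (hJ : UniqueDiffOn ℝ J) (hper : (F t θ).Periodic (2 * π)) (ht : t ∈ I) (hθ : θ ∈ J) :
    parallelInt (cdφ F) t θ = 0 := by
  have hcont := (hF.cdφ (m := 0) hI hJ (by norm_num)).continuous_φ ht hθ
  rw [parallelInt, intervalIntegral.integral_eq_sub_of_hasDerivAt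
    (fun φ _ => hF.hasDerivAt_φ one_ne_zero ht hθ φ) (hcont.intervalIntegrable _ _),
    ← hper 0, zero_add, sub_self]

end ContDiffOnCyl

section

variable {I : Set ℝ} {q k B D F : ℝ → ℝ → ℝ → ℝ} {t : ℝ}

lemma integrableOn_parallelInt (hF : ContDiffOnCyl 0 I (Ioo 0 π) F) (hF0 : IsBigOSin 0 I F)
    (ht : t ∈ I) : IntegrableOn (parallelInt F t) (Ioo 0 π) := by
  obtain ⟨C, -, hC⟩ := hF0.abs_parallelInt_le (singleton_subset_iff.2 ht) isCompact_singleton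
  exact integrableOn_Ioo_of_abs_le (hF.continuousOn_parallelInt_θ ht)
    fun θ hθ => by simpa using hC t rfl θ hθ

lemma parallelInt_cdt_eq (hI : IsOpen I) (hk : ContDiffOnCyl 0 I (Ioo 0 π) k)
    (hB : ContDiffOnCyl 1 I (Ioo 0 π) B) (hD : ContDiffOnCyl 1 I (Ioo 0 π) D)
    (hper : ∀ t θ, (D t θ).Periodic (2 * π))
    (hdiv : ∀ t ∈ I, ∀ θ ∈ Ioo 0 π, ∀ φ, cdt q t θ φ = k t θ φ + (cdθ B t θ φ + cdφ D t θ φ))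
    (ht : t ∈ I) {θ : ℝ} (hθ : θ ∈ Ioo 0 π) :
    parallelInt (cdt q) t θ = parallelInt k t θ + parallelInt (cdθ B) t θ := by
  have hJ : UniqueDiffOn ℝ (Ioo 0 π) := isOpen_Ioo.uniqueDiffOn
  have hkint := (hk.continuous_φ ht hθ).intervalIntegrable (μ := volume) 0 (2 * π)
  have hBint := ((hB.cdθ (m := 0) hI isOpen_Ioo (by norm_num)).continuous_φ ht
    hθ).intervalIntegrable (μ := volume) 0 (2 * π)
  have hDint := ((hD.cdφ (m := 0) hI hJ (by norm_num)).continuous_φ ht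
    hθ).intervalIntegrable (μ := volume) 0 (2 * π)
  have hD0 := hD.parallelInt_cdφ_eq_zero hI hJ (hper t θ) ht hθ
  rw [parallelInt] at hD0
  simp only [parallelInt, hdiv t ht θ hθ]
  rw [intervalIntegral.integral_add hkint (hBint.add hDint),
    intervalIntegral.integral_add hBint hDint, hD0, add_zero]

/- The flux `B` through a parallel tends to `0` at the poles, so removing polar caps and letting
them shrink produces no boundary term. -/
lemma hasDerivAt_integral_parallelInt_of_divergence (hI : IsOpen I)
    (hq : ContDiffOnCyl 1 I (Ioo 0 π) q) (hk : ContDiffOnCyl 0 I (Ioo 0 π) k)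
    (hB : ContDiffOnCyl 1 I (Ioo 0 π) B) (hD : ContDiffOnCyl 1 I (Ioo 0 π) D)
    (hper : ∀ t θ, (D t θ).Periodic (2 * π))
    (hdiv : ∀ t ∈ I, ∀ θ ∈ Ioo 0 π, ∀ φ, cdt q t θ φ = k t θ φ + (cdθ B t θ φ + cdφ D t θ φ))
    (hq0 : IsBigOSin 0 I q) (hk0 : IsBigOSin 0 I k) (hB0 : IsBigOSin 1 I B) (ht : t ∈ I) :
    HasDerivAt (fun s => ∫ θ in Ioo 0 π, parallelInt q s θ) (∫ θ in Ioo 0 π, parallelInt k t θ)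
      t := by
  have hJ : UniqueDiffOn ℝ (Ioo 0 π) := isOpen_Ioo.uniqueDiffOn
  refine hasDerivAt_integral_Ioo_of_flux (B := parallelInt B) pi_pos hI
    (hq.of_le zero_le_one).continuousOn_parallelInt
    (hq.cdt (m := 0) hI hJ (by norm_num)).continuousOn_parallelInt
    (fun s hs => hk.continuousOn_parallelInt_θ hs)
    (fun s hs θ hθ => hq.hasDerivAt_parallelInt_t hI hJ hs hθ)
    (fun s hs θ hθ => (hB.hasDerivAt_parallelInt_θ hI isOpen_Ioo hs hθ).congr_deriv ?_) ?_ ht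
  · rw [parallelInt_cdt_eq hI hk hB hD hper hdiv hs hθ, add_sub_cancel_left]
  · intro K hKI hK
    obtain ⟨C, -, hqC⟩ := hq0.abs_parallelInt_le hKI hK
    obtain ⟨C', -, hkC'⟩ := hk0.abs_parallelInt_le hKI hK
    obtain ⟨C'', hC'', hBC''⟩ := hB0.abs_parallelInt_le hKI hK
    simp only [zpow_zero, zpow_one, mul_one] at hqC hkC' hBC''
    refine ⟨max C (max C' C''), fun s hs θ hθ =>
      ⟨(hqC s hs θ hθ).trans (le_max_left _ _),
        (hkC' s hs θ hθ).trans ((le_max_left _ _).trans (le_max_right _ _)), ?_, ?_⟩⟩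
    · have hsin : sin θ ≤ θ - 0 := (sin_le hθ.1.le).trans_eq (sub_zero θ).symm
      exact (hBC'' s hs θ hθ).trans (mul_le_mul ((le_max_right _ _).trans (le_max_right _ _))
        hsin (sin_pos_of_mem_Ioo hθ).le (hC''.trans ((le_max_right _ _).trans (le_max_right _ _))))
    · have hsin : sin θ ≤ π - θ := sin_pi_sub θ ▸ sin_le (sub_pos.2 hθ.2).le
      exact (hBC'' s hs θ hθ).trans (mul_le_mul ((le_max_right _ _).trans (le_max_right _ _))
        hsin (sin_pos_of_mem_Ioo hθ).le (hC''.trans ((le_max_right _ _).trans (le_max_right _ _))))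

end

namespace RHMSolution

variable {I : Set ℝ} {A₁ Λ a : ℝ} {R : Renormalizer I A₁} (S : RHMSolution I A₁ R Λ a) {t : ℝ}

lemma isBigOSin_kineticDensity_mul_sin (hI : IsOpen I) :
    IsBigOSin 0 I fun t θ φ => S.kineticDensity t θ φ * sin θ :=
  (((S.isBigOSin_kineticDensity hI).mul (IsBigOSin.sin_zpow 1)).mono (by norm_num)).congr
    fun _ _ _ _ _ _ => by rw [zpow_one]

lemma isBigOSin_potentialDensity_mul_sin (hR : R.IsStationary) (hI : IsOpen I) :
    IsBigOSin 0 I fun t θ φ => S.potentialDensity t θ φ * sin θ :=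
  ((S.isBigOSin_potentialDensity hR hI).mul (IsBigOSin.sin_zpow 1)).congr
    fun _ _ _ _ _ _ => by rw [zpow_one]

lemma isBigOSin_stressDensity (hR : R.IsStationary) (hI : IsOpen I) :
    IsBigOSin 0 I S.stressDensity :=
  (((S.isBigOSin_kineticDensity_mul_sin hI).sub
    (S.isBigOSin_potentialDensity_mul_sin hR hI)).const_mul (1 / 2)).congr
      fun _ _ _ _ _ _ => by rw [stressDensity, mul_assoc, sub_mul]

lemma contDiffOnCyl_kineticDensity_mul_sin (hI : IsOpen I) :
    ContDiffOnCyl 0 I (Ioo 0 π) fun t θ φ => S.kineticDensity t θ φ * sin θ :=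
  ContDiffOn.mul ((S.contDiffOnCyl_kineticDensity hI).of_le zero_le_one)
    ContDiffOnCyl.contDiffOnCyl_sin

lemma contDiffOnCyl_potentialDensity_mul_sin (hI : IsOpen I) :
    ContDiffOnCyl 0 I (Ioo 0 π) fun t θ φ => S.potentialDensity t θ φ * sin θ :=
  ContDiffOn.mul ((S.contDiffOnCyl_potentialDensity hI).of_le zero_le_one)
    ContDiffOnCyl.contDiffOnCyl_sin

lemma integral_parallelInt_stressDensity (hR : R.IsStationary) (hI : IsOpen I) (ht : t ∈ I) :
    ∫ θ in Ioo 0 π, parallelInt S.stressDensity t θ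
      = 1 / 2 * sphInt (S.kineticDensity t) - 1 / 2 * sphInt (S.potentialDensity t) := by
  have hkin := S.contDiffOnCyl_kineticDensity_mul_sin hI
  have hpot := S.contDiffOnCyl_potentialDensity_mul_sin hI
  rw [sphInt_eq_integral_parallelInt, sphInt_eq_integral_parallelInt, ← mul_sub,
    ← integral_sub (integrableOn_parallelInt hkin (S.isBigOSin_kineticDensity_mul_sin hI) ht)
      (integrableOn_parallelInt hpot (S.isBigOSin_potentialDensity_mul_sin hR hI) ht),
    ← integral_const_mul]
  refine setIntegral_congr_fun measurableSet_Ioo fun θ hθ => ?_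
  simp only [parallelInt, stressDensity]
  rw [← intervalIntegral.integral_sub ((hkin.continuous_φ ht hθ).intervalIntegrable _ _)
    ((hpot.continuous_φ ht hθ).intervalIntegrable _ _), ← intervalIntegral.integral_const_mul]
  simp only [mul_assoc, sub_mul]

end RHMSolution

theorem statement_13_general {I : Set ℝ} {A₁ Λ a : ℝ} {R : Renormalizer I A₁}
    (S : RHMSolution I A₁ R Λ a) (hR : R.IsStationary) (hI : IsOpen I) {t : ℝ} (ht : t ∈ I) :
    HasDerivAt
      (fun s => 1 / 2 * sphInt (S.kineticDensity s) - 1 / 2 * sphInt (S.potentialDensity s))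
      (sphInt (S.kineticDensity t)) t := by
  rw [sphInt_eq_integral_parallelInt]
  refine (hasDerivAt_integral_parallelInt_of_divergence hI (S.contDiffOnCyl_stressDensity hI)
    (S.contDiffOnCyl_kineticDensity_mul_sin hI) (S.contDiffOnCyl_polarFlux hI)
    (S.contDiffOnCyl_azimuthalFlux hI) S.azimuthalFlux_periodic
    (fun s hs θ hθ φ => S.cdt_stressDensity hR hI hs hθ φ) (S.isBigOSin_stressDensity hR hI)
    (S.isBigOSin_kineticDensity_mul_sin hI) (S.isBigOSin_polarFlux hI) ht).congr_of_eventuallyEq ?_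
  filter_upwards [hI.mem_nhds ht] with s hs
  exact (S.integral_parallelInt_stressDensity hR hI hs).symm

/-- Proposition `prop:MF`: monotonicity-type identity for the
renormalized energy on the cylinder, for a `t`-independent renormalizer. -/
theorem statement_13
    (A₁ Λ a : ℝ) (Rω : Renormalizer (Ioi 0) A₁)
    (S : RHMSolution (Ioi 0) A₁ Rω Λ a)
    (hωt : ∀ t t' θ φ : ℝ, Rω.ω t θ φ = Rω.ω t' θ φ) :
    ∀ t ∈ Ioi (0 : ℝ),
      HasDerivAt (fun s : ℝ =>
          (1 / 2) * sphInt (fun θ φ =>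
              (cdt S.Φ s θ φ) ^ 2
                + Real.exp (4 * (S.Φ s θ φ - Real.log (Rω.ω s θ φ))) *
                  (cdt S.v s θ φ) ^ 2)
            - (1 / 2) * sphInt (fun θ φ =>
              gradNormSqS2 (S.Φ s) θ φ
                + Real.exp (4 * (S.Φ s θ φ - Real.log (Rω.ω s θ φ))) *
                  gradNormSqS2 (S.v s) θ φ
                + 2 * lapS2 (fun θ φ => Real.log (Rω.ω s θ φ)) θ φ * S.Φ s θ φ))
        (sphInt (fun θ φ =>
          (cdt S.Φ t θ φ) ^ 2
            + Real.exp (4 * (S.Φ t θ φ - Real.log (Rω.ω t θ φ))) *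
              (cdt S.v t θ φ) ^ 2))
        t :=
  fun _ ht => statement_13_general S (fun t _ t' _ => hωt t t') isOpen_Ioi ht
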